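/- arXiv:1501.02072 — 2 statements merged into one kernel-verified Lean document; each statement's English description precedes it below -/
import Mathlib

section
/- Consider the approximation of real numbers by the elements of the orbit PSL₂(ℤ)·φ of the Golden Ratio φ, with height function H. Then the Lagrange spectrum Sp_Lag = {c(y) : y ∈ ℝ ∖ (ℚ ∪ PSL₂(ℤ)·φ)} is a closed and bounded subset of ℝ. -/
open scoped Classical

/-- `α` is a real quadratic irrational: an irrational real number which is the root of a
quadratic polynomial with rational coefficients. -/
def IsQuadIrr (α : ℝ) : Prop :=
  Irrational α ∧ ∃ a b c : ℚ, a ≠ 0 ∧ (a : ℝ) * α ^ 2 + (b : ℝ) * α + (c : ℝ) = 0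

/-- `σ` is the Galois conjugate of the real quadratic irrational `α`: the other root of
its minimal (quadratic) polynomial over `ℚ`. -/
def IsGalConj (α σ : ℝ) : Prop :=
  Irrational α ∧ σ ≠ α ∧
    ∃ a b c : ℚ, a ≠ 0 ∧ (a : ℝ) * α ^ 2 + (b : ℝ) * α + (c : ℝ) = 0 ∧
      (a : ℝ) * σ ^ 2 + (b : ℝ) * σ + (c : ℝ) = 0

/-- The Galois conjugate `α^σ` of a real quadratic irrational `α` (junk value `0` if `α`
is not a real quadratic irrational). -/
noncomputable def galConj (α : ℝ) : ℝ :=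
  if h : ∃ σ, IsGalConj α σ then h.choose else 0

/-- The height `H(α) = 2/|α − α^σ|` of a real quadratic irrational `α`. -/
noncomputable def qiHeight (α : ℝ) : ℝ := 2 / |α - galConj α|

/-- The action of `SL₂(ℤ)` (inducing the action of `PSL₂(ℤ)`) on real numbers by
homographies: the matrix `(a b; c d)` sends `x` to `(a·x+b)/(c·x+d)`. -/
noncomputable def mob (A : Matrix.SpecialLinearGroup (Fin 2) ℤ) (x : ℝ) : ℝ :=
  ((A.1 0 0 : ℝ) * x + (A.1 0 1 : ℝ)) / ((A.1 1 0 : ℝ) * x + (A.1 1 1 : ℝ))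

/-- The orbit `PSL₂(ℤ)·α₀` of a real number under the homography action. -/
def mobOrbit (α₀ : ℝ) : Set ℝ := {α | ∃ A, mob A α₀ = α}

/-- The Golden Ratio `φ = (1+√5)/2`. -/
noncomputable def goldenRat : ℝ := (1 + Real.sqrt 5) / 2

/-- The approximation constant `c(y)` of `y` by the elements of `Z` (with the height
function `H = qiHeight`): the liminf of `H(α)·|y − α|` as `α` ranges over `Z` along the
Fréchet filter, i.e. the sup over finite subsets `F` of the inf over `α ∈ Z ∖ F` of
`H(α)·|y − α|`. -/
noncomputable def approxConst (Z : Set ℝ) (y : ℝ) : ℝ :=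
  ⨆ F : Finset ℝ, ⨅ α : {α : ℝ // α ∈ Z ∧ α ∉ F}, qiHeight α.1 * |y - α.1|

/-- The Lagrange spectrum for the approximation of the elements of
`ℝ ∖ (ℚ ∪ Z)` by the elements of `Z`. -/
noncomputable def lagrangeSpectrum (Z : Set ℝ) : Set ℝ :=
  approxConst Z '' {y : ℝ | Irrational y ∧ y ∉ Z}

namespace GoldenSpectrum

open Filter

/-- `L` is the cut point of a property of real numbers which holds below `L` and fails above. -/
def IsThreshold (P : ℝ → Prop) (L : ℝ) : Prop :=
  (∀ r < L, P r) ∧ ∀ r > L, ¬ P r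

theorem exists_isThreshold {P : ℝ → Prop} (hP : ∀ r s, r ≤ s → P s → P r) {a b : ℝ}
    (ha : P a) (hb : ¬ P b) : ∃ L, a ≤ L ∧ L ≤ b ∧ IsThreshold P L := by
  have hbd : ∀ r ∈ {r | P r}, r ≤ b := by
    intro r hr
    by_contra h
    exact hb (hP _ _ (not_le.1 h).le hr)
  refine ⟨sSup {r | P r}, le_csSup ⟨b, hbd⟩ ha, csSup_le ⟨a, ha⟩ hbd, ?_, ?_⟩
  · intro r hr
    obtain ⟨s, hs, hrs⟩ := exists_lt_of_lt_csSup ⟨a, ha⟩ hr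
    exact hP _ _ hrs.le hs
  · intro r hr hPr
    exact absurd (le_csSup ⟨b, hbd⟩ hPr) (not_le.2 hr)

/-- `L` is the liminf of `g`, phrased with finite sublevel sets. -/
def IsLiminf (g : ℕ → ℝ) (L : ℝ) : Prop :=
  IsThreshold (fun r => {n | g n < r}.Finite) L

/-- A binary sequence which is neither eventually constant nor eventually alternating. -/
def Admissible (x : ℕ → Bool) : Prop :=
  (∀ n, ∃ m, n ≤ m ∧ x m = x (m + 1)) ∧ ∀ n, ∃ m, n ≤ m ∧ x m ≠ x (m + 1)

/-- The letters at distance `i` after and before the position `n`. -/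
def window (x : ℕ → Bool) (n i : ℕ) : Bool × Bool := (x (n + i), x (n - 1 - i))

theorem exists_frequently_eq (u : ℕ → ℕ → Bool × Bool) {P : ℕ → Prop}
    (hP : ∃ᶠ n in atTop, P n) :
    ∃ ζ : ℕ → Bool × Bool, ∀ N, ∃ᶠ n in atTop, P n ∧ ∀ i < N, u n i = ζ i := by
  obtain ⟨ψ, hψ, hPψ⟩ := extraction_of_frequently_atTop hP
  obtain ⟨ζ, θ, hθ, hlim⟩ := CompactSpace.tendsto_subseq (u ∘ ψ)
  refine ⟨ζ, fun N => ?_⟩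
  have h1 : ∀ᶠ j in atTop, ∀ i ∈ Finset.range N, u (ψ (θ j)) i = ζ i := by
    rw [Filter.eventually_all_finset]
    intro i _
    have h2 := (tendsto_pi_nhds.1 hlim) i
    rw [nhds_discrete, tendsto_pure] at h2
    exact h2
  have h3 : Tendsto (fun j => ψ (θ j)) atTop atTop := (hψ.comp hθ).tendsto_atTop
  refine h3.frequently (p := fun n => P n ∧ ∀ i < N, u n i = ζ i) (Eventually.frequently ?_)
  filter_upwards [h1] with j hj
  exact ⟨hPψ _, fun i hi => hj i (Finset.mem_range.2 hi)⟩

theorem exists_block_position {l : ℕ → ℕ} (hl : ∀ N, 0 < l N) (p : ℕ) :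
    ∃ N i, i < l N ∧ p = ∑ j ∈ Finset.range N, l j + i := by
  induction p with
  | zero => exact ⟨0, 0, hl 0, by simp⟩
  | succ p ih =>
    obtain ⟨N, i, hi, rfl⟩ := ih
    by_cases h : i + 1 < l N
    · exact ⟨N, i + 1, h, by ring⟩
    · refine ⟨N + 1, 0, hl _, ?_⟩
      rw [Finset.sum_range_succ]
      omega

theorem block_position_unique {l : ℕ → ℕ} {N M i j : ℕ} (hi : i < l N) (hj : j < l M)
    (h : ∑ k ∈ Finset.range N, l k + i = ∑ k ∈ Finset.range M, l k + j) : N = M ∧ i = j := by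
  have hmono : ∀ {a b : ℕ}, a < b →
      ∑ k ∈ Finset.range a, l k + l a ≤ ∑ k ∈ Finset.range b, l k := by
    intro a b hab
    rw [← Finset.sum_range_succ]
    exact Finset.sum_le_sum_of_subset (Finset.range_mono hab)
  rcases lt_trichotomy N M with h1 | rfl | h1
  · have := hmono h1
    omega
  · exact ⟨rfl, by omega⟩
  · have := hmono h1
    omega

theorem exists_concatenation {l : ℕ → ℕ} (hl : ∀ N, 0 < l N) (Y : ℕ → ℕ → Bool) :
    ∃ x : ℕ → Bool, ∀ N i, i < l N → x (∑ j ∈ Finset.range N, l j + i) = Y N i := by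
  choose B I hI hp using exists_block_position hl
  refine ⟨fun p => Y (B p) (I p), fun N i hi => ?_⟩
  obtain ⟨h1, h2⟩ := block_position_unique hi (hI _) (hp (∑ j ∈ Finset.range N, l j + i))
  dsimp only
  rw [← h1, ← h2]

theorem window_concatenation {x : ℕ → Bool} {ζ : ℕ → Bool × Bool} {X : ℕ → ℕ → Bool}
    {a l : ℕ → ℕ} (hl : ∀ N, N < l N) (ha : ∀ N, N ≤ a N)
    (hx : ∀ N i, i < l N → x (∑ j ∈ Finset.range N, l j + i) = X N (a N + i))
    (hstart : ∀ N, ∀ i < N, window (X N) (a N) i = ζ i)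
    (hend : ∀ N, ∀ i < N, window (X N) (a N + l N) i = ζ i)
    {N i j : ℕ} (hi : i < l (N + 1)) (hj : j < N) :
    window x (∑ k ∈ Finset.range (N + 1), l k + i) j
      = window (X (N + 1)) (a (N + 1) + i) j := by
  have haN := ha (N + 1)
  have hlN := hl N
  refine Prod.ext ?_ ?_
  · simp only [window]
    by_cases h : i + j < l (N + 1)
    · rw [add_assoc, add_assoc]
      exact hx _ _ h
    · obtain ⟨j', hj'⟩ := Nat.exists_eq_add_of_le (not_lt.1 h)
      have hj'N : j' < N := by omega
      have e1 : ∑ k ∈ Finset.range (N + 1), l k + i + j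
          = ∑ k ∈ Finset.range (N + 2), l k + j' := by
        rw [Finset.sum_range_succ _ (N + 1)]
        omega
      have e2 : a (N + 1) + i + j = a (N + 1) + l (N + 1) + j' := by omega
      have h1 := congrArg Prod.fst (hstart (N + 2) j' (by omega))
      have h2 := congrArg Prod.fst (hend (N + 1) j' (by omega))
      have h3 := hl (N + 2)
      simp only [window] at h1 h2
      rw [e1, e2, hx _ _ (by omega), h1, h2]
  · simp only [window]
    by_cases h : j < i
    · have e1 : ∑ k ∈ Finset.range (N + 1), l k + i - 1 - j
          = ∑ k ∈ Finset.range (N + 1), l k + (i - 1 - j) := by omega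
      have e2 : a (N + 1) + i - 1 - j = a (N + 1) + (i - 1 - j) := by omega
      rw [e1, e2]
      exact hx _ _ (by omega)
    · obtain ⟨j', hj'⟩ := Nat.exists_eq_add_of_le (not_lt.1 h)
      have e1 : ∑ k ∈ Finset.range (N + 1), l k + i - 1 - j
          = ∑ k ∈ Finset.range N, l k + (l N - 1 - j') := by
        rw [Finset.sum_range_succ]
        omega
      have e2 : a (N + 1) + i - 1 - j = a (N + 1) - 1 - j' := by omega
      have e3 : a N + (l N - 1 - j') = a N + l N - 1 - j' := by omega
      have h1 := congrArg Prod.snd (hstart (N + 1) j' (by omega))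
      have h2 := congrArg Prod.snd (hend N j' (by omega))
      simp only [window] at h1 h2
      rw [e1, e2, hx _ _ (by omega), e3, h1, h2]

theorem exists_long_block {x : ℕ → Bool} (hx : Admissible x) {Q : ℕ → Prop}
    (hQ : ∃ᶠ n in atTop, Q n) (n₀ N : ℕ) :
    ∃ a l, n₀ ≤ a ∧ N < l ∧ Q a ∧ Q (a + l) ∧
      (∃ i, i + 1 < l ∧ x (a + i) = x (a + (i + 1))) ∧
      ∃ i, i + 1 < l ∧ x (a + i) ≠ x (a + (i + 1)) := by
  obtain ⟨a, ha, hQa⟩ := (frequently_atTop.1 hQ) n₀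
  obtain ⟨m, hm, hxm⟩ := hx.1 a
  obtain ⟨m', hm', hxm'⟩ := hx.2 a
  obtain ⟨b, hb, hQb⟩ := (frequently_atTop.1 hQ) (a + N + 2 + m + m')
  obtain ⟨i, rfl⟩ := Nat.exists_eq_add_of_le hm
  obtain ⟨i', rfl⟩ := Nat.exists_eq_add_of_le hm'
  obtain ⟨l, rfl⟩ := Nat.exists_eq_add_of_le (show a ≤ b by omega)
  exact ⟨a, l, ha, by omega, hQa, hQb, ⟨i, by omega, hxm⟩, i', by omega, hxm'⟩

/-- The set of liminfs, along admissible binary sequences, of a functional which depends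
uniformly continuously on the letters around the position is closed. -/
theorem isClosed_setOf_isLiminf (G : (ℕ → Bool) → ℕ → ℝ)
    (hG : ∀ ε > 0, ∃ N, ∀ x n x' m, N ≤ n → N ≤ m →
      (∀ i < N, window x n i = window x' m i) → |G x n - G x' m| < ε) :
    IsClosed {L | ∃ x, Admissible x ∧ IsLiminf (G x) L} := by
  refine isClosed_of_closure_subset fun lam hlam => ?_
  have step : ∀ k : ℕ, ∃ (x : ℕ → Bool) (ζ : ℕ → Bool × Bool), Admissible x ∧
      (∃ n₀, ∀ m ≥ n₀, lam - 1 / ((k : ℝ) + 1) ≤ G x m) ∧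
      ∀ N, ∃ᶠ n in atTop, G x n < lam + 1 / ((k : ℝ) + 1) ∧ ∀ i < N, window x n i = ζ i := by
    intro k
    have hk : (0 : ℝ) < 1 / ((k : ℝ) + 1) := by positivity
    obtain ⟨L, ⟨x, hx, hL⟩, hd⟩ := Metric.mem_closure_iff.1 hlam _ hk
    rw [Real.dist_eq, abs_lt] at hd
    have h1 := hL.1 (lam - 1 / ((k : ℝ) + 1)) (by linarith)
    have h2 := hL.2 (lam + 1 / ((k : ℝ) + 1)) (by linarith)
    obtain ⟨ζ, hζ⟩ := exists_frequently_eq (window x) (Nat.frequently_atTop_iff_infinite.2 h2)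
    obtain ⟨B, hB⟩ := h1.bddAbove
    refine ⟨x, ζ, hx, ⟨B + 1, fun m hm => ?_⟩, hζ⟩
    by_contra h
    have := hB (not_le.1 h)
    omega
  choose x ζ hx hlow hfreq using step
  obtain ⟨ω, hω⟩ := exists_frequently_eq ζ (P := fun _ => True)
    ((frequently_true_iff_neBot _).2 inferInstance)
  have step2 : ∀ N : ℕ, ∃ (X : ℕ → Bool) (a l : ℕ), N ≤ a ∧ N < l ∧
      (∀ m ≥ a, lam - 1 / ((N : ℝ) + 1) ≤ G X m) ∧ G X a < lam + 1 / ((N : ℝ) + 1) ∧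
      (∀ i < N, window X a i = ω i) ∧ (∀ i < N, window X (a + l) i = ω i) ∧
      (∃ i, i + 1 < l ∧ X (a + i) = X (a + (i + 1))) ∧
      ∃ i, i + 1 < l ∧ X (a + i) ≠ X (a + (i + 1)) := by
    intro N
    obtain ⟨k, hk, -, hkω⟩ := (frequently_atTop.1 (hω N)) N
    obtain ⟨n₀, hn₀⟩ := hlow k
    obtain ⟨a, l, ha, hl, hQa, hQb, h1, h2⟩ := exists_long_block (hx k) (hfreq k N) (n₀ + N) N
    have hkN : 1 / ((k : ℝ) + 1) ≤ 1 / ((N : ℝ) + 1) := by gcongr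
    refine ⟨x k, a, l, by omega, hl, fun m hm => ?_, ?_, ?_, ?_, h1, h2⟩
    · linarith [hn₀ m (by omega)]
    · linarith [hQa.1]
    · exact fun i hi => (hQa.2 i hi).trans (hkω i hi)
    · exact fun i hi => (hQb.2 i hi).trans (hkω i hi)
  choose X a l ha hl hGlow hGup hstart hend heq hne using step2
  have hlpos : ∀ N, 0 < l N := fun N => (Nat.zero_le N).trans_lt (hl N)
  obtain ⟨c, hc⟩ := exists_concatenation hlpos (fun N i => X N (a N + i))
  set S : ℕ → ℕ := fun N => ∑ j ∈ Finset.range N, l j with hS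
  have hSmono : Monotone S := fun M N h => Finset.sum_le_sum_of_subset (Finset.range_mono h)
  have hSle : ∀ N, N ≤ S N := by
    intro N
    induction N with
    | zero => exact Nat.zero_le _
    | succ N ih =>
      have : S (N + 1) = S N + l N := Finset.sum_range_succ _ _
      have := hlpos N
      omega
  have hclose : ∀ ε > 0, ∃ K, ∀ N ≥ K, ∀ i < l N,
      |G c (S N + i) - G (X N) (a N + i)| < ε ∧ 1 / ((N : ℝ) + 1) < ε := by
    intro ε hε
    obtain ⟨N₀, hN₀⟩ := hG ε hε
    obtain ⟨N₁, hN₁⟩ := exists_nat_one_div_lt hε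
    refine ⟨N₀ + N₁ + 1, fun N hN i hi => ⟨?_, ?_⟩⟩
    · obtain ⟨M, rfl⟩ : ∃ M, N = M + 1 := ⟨N - 1, by omega⟩
      have h1 := hSle (M + 1)
      have h2 := ha (M + 1)
      refine hN₀ _ _ _ _ (by omega) (by omega) fun j hj => ?_
      exact window_concatenation hl ha hc hstart hend hi (by omega)
    · refine lt_of_le_of_lt ?_ hN₁
      have : (N₁ : ℝ) ≤ N := by exact_mod_cast (by omega : N₁ ≤ N)
      gcongr
  refine ⟨c, ⟨fun n => ?_, fun n => ?_⟩, fun r hr => ?_, fun r hr => ?_⟩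
  · obtain ⟨i, hi, h⟩ := heq n
    refine ⟨S n + i, by have := hSle n; omega, ?_⟩
    rw [add_assoc, hc n i (by omega), hc n (i + 1) hi, h]
  · obtain ⟨i, hi, h⟩ := hne n
    refine ⟨S n + i, by have := hSle n; omega, ?_⟩
    rw [add_assoc, hc n i (by omega), hc n (i + 1) hi]
    exact h
  · obtain ⟨K, hK⟩ := hclose ((lam - r) / 2) (by linarith)
    refine (Set.finite_lt_nat (S K)).subset fun p hp => ?_
    by_contra hpK
    obtain ⟨N, i, hi, rfl⟩ := exists_block_position hlpos p
    have hKN : K ≤ N := by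
      by_contra hNK
      have h1 : S (N + 1) ≤ S K := hSmono (by omega)
      have h2 : S (N + 1) = S N + l N := Finset.sum_range_succ _ _
      exact hpK (show S N + i < S K by omega)
    obtain ⟨h1, h2⟩ := hK N hKN i hi
    have h3 := hGlow N (a N + i) (by omega)
    have h4 : G c (S N + i) < r := hp
    rw [abs_lt] at h1
    linarith [h1.1]
  · obtain ⟨K, hK⟩ := hclose ((r - lam) / 2) (by linarith)
    refine Nat.frequently_atTop_iff_infinite.1 (frequently_atTop.2 fun n => ?_)
    refine ⟨S (n + K), (Nat.le_add_right n K).trans (hSle _), ?_⟩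
    obtain ⟨h1, h2⟩ := hK (n + K) (Nat.le_add_left K n) 0 (hlpos _)
    have h3 := hGup (n + K)
    rw [add_zero, add_zero, abs_lt] at h1
    linarith [h1.2]

/-- The inverse branches of the Farey map: in the coordinate `z = t / (1 + t)`, the letter `true`
is `t ↦ t + 1` and the letter `false` is `t ↦ t / (1 + t)`. -/
noncomputable def branch (b : Bool) (z : ℝ) : ℝ :=
  if b then 1 / (2 - z) else z / (1 + z)

theorem branch_mem {b : Bool} {z : ℝ} (hz : z ∈ Set.Icc (0 : ℝ) 1) :
    branch b z ∈ Set.Icc (0 : ℝ) 1 := by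
  obtain ⟨h0, h1⟩ := hz
  cases b
  · have : 0 < 1 + z := by linarith
    simp only [branch, Bool.false_eq_true, if_false]
    exact ⟨by positivity, (div_le_one this).2 (by linarith)⟩
  · have : 0 < 2 - z := by linarith
    simp only [branch, if_true]
    exact ⟨by positivity, (div_le_one this).2 (by linarith)⟩

theorem half_le_branch_true {z : ℝ} (hz : z ∈ Set.Icc (0 : ℝ) 1) : 1 / 2 ≤ branch true z := by
  obtain ⟨h0, h1⟩ := hz
  simp only [branch, if_true]
  rw [div_le_div_iff₀ (by norm_num) (by linarith)]
  linarith

theorem branch_false_le_half {z : ℝ} (hz : z ∈ Set.Icc (0 : ℝ) 1) : branch false z ≤ 1 / 2 := by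
  obtain ⟨h0, h1⟩ := hz
  simp only [branch, Bool.false_eq_true, if_false]
  rw [div_le_div_iff₀ (by linarith) (by norm_num)]
  linarith

theorem continuousAt_branch {b : Bool} {z : ℝ} (hz : z ∈ Set.Icc (0 : ℝ) 1) :
    ContinuousAt (branch b) z := by
  obtain ⟨h0, h1⟩ := hz
  cases b
  · have h : 1 + z ≠ 0 := by linarith
    have : branch false = fun z => z / (1 + z) := by
      funext z
      simp [branch]
    rw [this]
    exact continuousAt_id.div (by fun_prop) h
  · have h : 2 - z ≠ 0 := by linarith
    have : branch true = fun z => 1 / (2 - z) := by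
      funext z
      simp [branch]
    rw [this]
    exact continuousAt_const.div (by fun_prop) h

theorem abs_branch_sub_le {b : Bool} {z w : ℝ} (hz : z ∈ Set.Icc (0 : ℝ) 1)
    (hw : w ∈ Set.Icc (0 : ℝ) 1) {N : ℕ} (h : |z - w| ≤ 1 / ((N : ℝ) + 1)) :
    |branch b z - branch b w| ≤ 1 / (((N + 1 : ℕ) : ℝ) + 1) := by
  wlog hzw : w ≤ z generalizing z w
  · rw [abs_sub_comm]
    exact this hw hz (by rwa [abs_sub_comm]) (not_le.1 hzw).le
  obtain ⟨hz0, hz1⟩ := hz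
  obtain ⟨hw0, hw1⟩ := hw
  have hN : (0 : ℝ) < (N : ℝ) + 1 := by positivity
  rw [abs_of_nonneg (by linarith), le_div_iff₀ hN] at h
  push_cast
  cases b
  · have e : branch false z - branch false w = (z - w) / ((1 + z) * (1 + w)) := by
      simp only [branch, Bool.false_eq_true, if_false]
      rw [div_sub_div _ _ (by linarith) (by linarith)]
      ring_nf
    have hpos : 0 < (1 + z) * (1 + w) := by positivity
    rw [e, abs_of_nonneg (div_nonneg (by linarith) hpos.le),
      div_le_div_iff₀ hpos (by positivity)]
    nlinarith [mul_nonneg hz0 hw0]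
  · have e : branch true z - branch true w = (z - w) / ((2 - z) * (2 - w)) := by
      simp only [branch, if_true]
      rw [div_sub_div _ _ (by linarith) (by linarith)]
      ring_nf
    have hpos : 0 < (2 - z) * (2 - w) := mul_pos (by linarith) (by linarith)
    rw [e, abs_of_nonneg (div_nonneg (by linarith) hpos.le),
      div_le_div_iff₀ hpos (by positivity)]
    nlinarith [mul_nonneg (sub_nonneg.2 hz1) (sub_nonneg.2 hw1)]

theorem abs_sub_le_one {z w : ℝ} (hz : z ∈ Set.Icc (0 : ℝ) 1) (hw : w ∈ Set.Icc (0 : ℝ) 1) :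
    |z - w| ≤ 1 / (((0 : ℕ) : ℝ) + 1) := by
  obtain ⟨hz0, hz1⟩ := hz
  obtain ⟨hw0, hw1⟩ := hw
  rw [abs_le]
  norm_num
  constructor <;> linarith

/-- `z n ∈ [0, 1]` is a point with code `x n, x (n + 1), …`. -/
def IsChain (x : ℕ → Bool) (z : ℕ → ℝ) : Prop :=
  ∀ n, z n ∈ Set.Icc (0 : ℝ) 1 ∧ z n = branch (x n) (z (n + 1))

theorem IsChain.abs_sub_le {x x' : ℕ → Bool} {z z' : ℕ → ℝ} (hz : IsChain x z)
    (hz' : IsChain x' z') (N : ℕ) : ∀ n m, (∀ i < N, x (n + i) = x' (m + i)) →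
      |z n - z' m| ≤ 1 / ((N : ℝ) + 1) := by
  induction N with
  | zero => exact fun n m _ => abs_sub_le_one (hz n).1 (hz' m).1
  | succ N ih =>
    intro n m h
    have h0 := h 0 (Nat.succ_pos N)
    rw [add_zero, add_zero] at h0
    rw [(hz n).2, (hz' m).2, h0]
    refine abs_branch_sub_le (hz _).1 (hz' _).1 (ih _ _ fun i hi => ?_)
    have := h (i + 1) (by omega)
    rwa [add_assoc, add_assoc, add_comm 1 i]

theorem eq_of_abs_sub_le_one_div {z w : ℝ} (h : ∀ N : ℕ, |z - w| ≤ 1 / ((N : ℝ) + 1)) :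
    z = w := by
  by_contra hne
  obtain ⟨N, hN⟩ := exists_nat_one_div_lt (abs_pos.2 (sub_ne_zero.2 hne))
  exact absurd (h N) (not_le.2 hN)

theorem IsChain.eq {x x' : ℕ → Bool} {z z' : ℕ → ℝ} (hz : IsChain x z) (hz' : IsChain x' z')
    {n m : ℕ} (h : ∀ i, x (n + i) = x' (m + i)) : z n = z' m :=
  eq_of_abs_sub_le_one_div fun N => hz.abs_sub_le hz' N n m fun i _ => h i

/-- The `N`-th approximation of the point with code `x k, x (k + 1), …`. -/
noncomputable def approximant (x : ℕ → Bool) : ℕ → ℕ → ℝ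
  | _, 0 => 0
  | k, N + 1 => branch (x k) (approximant x (k + 1) N)

theorem approximant_mem (x : ℕ → Bool) (k N : ℕ) :
    approximant x k N ∈ Set.Icc (0 : ℝ) 1 := by
  induction N generalizing k with
  | zero => simp [approximant]
  | succ N ih => exact branch_mem (ih (k + 1))

theorem abs_approximant_sub_le (x : ℕ → Bool) (N M : ℕ) (h : N ≤ M) (k : ℕ) :
    |approximant x k N - approximant x k M| ≤ 1 / ((N : ℝ) + 1) := by
  induction N generalizing k M with
  | zero => exact abs_sub_le_one (approximant_mem x k 0) (approximant_mem x k M)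
  | succ N ih =>
    obtain ⟨M, rfl⟩ : ∃ M', M = M' + 1 := ⟨M - 1, by omega⟩
    exact abs_branch_sub_le (approximant_mem x _ N) (approximant_mem x _ M)
      (ih M (by omega) (k + 1))

theorem exists_isChain (x : ℕ → Bool) : ∃ z, IsChain x z := by
  have hlim : ∀ k, ∃ z, Tendsto (approximant x k) atTop (nhds z) := by
    intro k
    refine cauchySeq_tendsto_of_complete
      (cauchySeq_of_le_tendsto_0' (fun N : ℕ => 1 / ((N : ℝ) + 1)) (fun N M h => ?_)
        tendsto_one_div_add_atTop_nhds_zero_nat)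
    rw [Real.dist_eq]
    exact abs_approximant_sub_le x N M h k
  choose z hz using hlim
  have hmem : ∀ n, z n ∈ Set.Icc (0 : ℝ) 1 := fun n =>
    isClosed_Icc.mem_of_tendsto (hz n) (Eventually.of_forall fun N => approximant_mem x n N)
  refine ⟨z, fun n => ⟨hmem n, ?_⟩⟩
  have h1 : Tendsto (fun N => approximant x n (N + 1)) atTop (nhds (z n)) :=
    (tendsto_add_atTop_iff_nat 1).2 (hz n)
  exact tendsto_nhds_unique h1 ((continuousAt_branch (hmem (n + 1))).tendsto.comp (hz (n + 1)))

/-- The point of `[0, 1]` with code `x n, x (n + 1), …`. -/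
noncomputable def future (x : ℕ → Bool) : ℕ → ℝ := (exists_isChain x).choose

theorem isChain_future (x : ℕ → Bool) : IsChain x (future x) := (exists_isChain x).choose_spec

theorem future_mem (x : ℕ → Bool) (n : ℕ) : future x n ∈ Set.Icc (0 : ℝ) 1 :=
  (isChain_future x n).1

theorem future_eq (x : ℕ → Bool) (n : ℕ) : future x n = branch (x n) (future x (n + 1)) :=
  (isChain_future x n).2

/-- The point of `[0, 1]` with finite code `x (n - 1), …, x 0`. -/
noncomputable def past (x : ℕ → Bool) : ℕ → ℝ
  | 0 => 1
  | n + 1 => branch (x n) (past x n)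

theorem past_mem (x : ℕ → Bool) (n : ℕ) : past x n ∈ Set.Icc (0 : ℝ) 1 := by
  induction n with
  | zero => simp [past]
  | succ n ih => exact branch_mem ih

theorem abs_past_sub_le {x x' : ℕ → Bool} (N : ℕ) : ∀ n m, N ≤ n → N ≤ m →
    (∀ i < N, x (n - 1 - i) = x' (m - 1 - i)) →
      |past x n - past x' m| ≤ 1 / ((N : ℝ) + 1) := by
  induction N with
  | zero => exact fun n m _ _ _ => abs_sub_le_one (past_mem x n) (past_mem x' m)
  | succ N ih =>
    intro n m hn hm h
    obtain ⟨n, rfl⟩ : ∃ n', n = n' + 1 := ⟨n - 1, by omega⟩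
    obtain ⟨m, rfl⟩ : ∃ m', m = m' + 1 := ⟨m - 1, by omega⟩
    have h0 : x n = x' m := by simpa using h 0 (Nat.succ_pos N)
    rw [past, past, h0]
    refine abs_branch_sub_le (past_mem x n) (past_mem x' m)
      (ih n m (by omega) (by omega) fun i hi => ?_)
    have := h (i + 1) (by omega)
    rwa [show n + 1 - 1 - (i + 1) = n - 1 - i by omega,
      show m + 1 - 1 - (i + 1) = m - 1 - i by omega] at this

theorem branch_eq_zero {b : Bool} {z : ℝ} (hz : z ∈ Set.Icc (0 : ℝ) 1) (h : branch b z = 0) :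
    b = false ∧ z = 0 := by
  cases b
  · simp only [branch, Bool.false_eq_true, if_false, div_eq_zero_iff] at h
    rcases h with h | h
    · exact ⟨rfl, h⟩
    · linarith [hz.1]
  · linarith [half_le_branch_true hz]

theorem branch_eq_one {b : Bool} {z : ℝ} (hz : z ∈ Set.Icc (0 : ℝ) 1) (h : branch b z = 1) :
    b = true ∧ z = 1 := by
  cases b
  · linarith [branch_false_le_half hz]
  · have h2 : 2 - z ≠ 0 := by linarith [hz.2]
    simp only [branch, if_true] at h
    rw [div_eq_one_iff_eq h2] at h
    exact ⟨rfl, by linarith⟩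

theorem future_mem_Ioo {x : ℕ → Bool} (hx : Admissible x) (n : ℕ) :
    future x n ∈ Set.Ioo (0 : ℝ) 1 := by
  have key : ∀ (c : ℝ) (b₀ : Bool),
      (∀ b z, z ∈ Set.Icc (0 : ℝ) 1 → branch b z = c → b = b₀ ∧ z = c) → future x n ≠ c := by
    intro c b₀ hc h
    have hall : ∀ i, future x (n + i) = c := by
      intro i
      induction i with
      | zero => exact h
      | succ i ih => exact (hc _ _ (future_mem x _) ((future_eq x (n + i)).symm.trans ih)).2
    have hb : ∀ i, x (n + i) = b₀ := fun i =>
      (hc _ _ (future_mem x _) ((future_eq x (n + i)).symm.trans (hall i))).1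
    obtain ⟨m, hm, hne⟩ := hx.2 n
    obtain ⟨i, rfl⟩ := Nat.exists_eq_add_of_le hm
    exact hne ((hb i).trans (hb (i + 1)).symm)
  exact ⟨(future_mem x n).1.lt_of_ne'
      (key 0 false fun b z hz h => branch_eq_zero hz h),
    (future_mem x n).2.lt_of_ne (key 1 true fun b z hz h => branch_eq_one hz h)⟩

theorem irrational_future {x : ℕ → Bool} (hx : Admissible x) (n : ℕ) :
    Irrational (future x n) := by
  have key : ∀ q : ℕ, ∀ n (p : ℤ), 0 < q → future x n * q ≠ p := by
    intro q
    induction q using Nat.strong_induction_on with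
    | _ q ih =>
      intro n p hq h
      obtain ⟨h0, h1⟩ := future_mem_Ioo hx n
      obtain ⟨h0', h1'⟩ := future_mem_Ioo hx (n + 1)
      have hqR : (0 : ℝ) < q := by exact_mod_cast hq
      have hp0 : (0 : ℝ) < p := by rw [← h]; positivity
      have hpq : (p : ℝ) < q := by rw [← h]; nlinarith
      have hp0' : 0 < p := by exact_mod_cast hp0
      have hpq' : p < q := by exact_mod_cast hpq
      obtain ⟨k, rfl⟩ := Int.eq_ofNat_of_zero_le hp0'.le
      have hk : k < q := by exact_mod_cast hpq'
      have hk0 : 0 < k := by exact_mod_cast hp0'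
      have e := future_eq x n
      cases hb : x n
      · simp only [branch, hb, Bool.false_eq_true, if_false] at e
        rw [eq_div_iff (by linarith)] at e
        refine ih (q - k) (by omega) (n + 1) k (by omega) ?_
        rw [Nat.cast_sub hk.le]
        push_cast at h ⊢
        rw [← h]
        linear_combination (-(q : ℝ)) * e
      · simp only [branch, hb, if_true] at e
        rw [eq_div_iff (by linarith)] at e
        refine ih k hk (n + 1) (2 * k - q) hk0 ?_
        push_cast at h ⊢
        rw [← h]
        linear_combination (-(q : ℝ)) * e
  rintro ⟨r, hr⟩
  refine key r.den n r.num r.den_pos ?_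
  rw [← hr]
  exact_mod_cast Rat.mul_den_eq_num r

/-- The binary quadratic form `A X² + B X Y + C Y²` is stored as `(A, B, C)`, and `act b f` is its
composition with the homography of the letter `b`. -/
def act (b : Bool) (f : ℤ × ℤ × ℤ) : ℤ × ℤ × ℤ :=
  if b then (f.1, 2 * f.1 + f.2.1, f.1 + f.2.1 + f.2.2)
  else (f.1 + f.2.1 + f.2.2, f.2.1 + 2 * f.2.2, f.2.2)

/-- The inverse of `act b`. -/
def actInv (b : Bool) (f : ℤ × ℤ × ℤ) : ℤ × ℤ × ℤ :=
  if b then (f.1, f.2.1 - 2 * f.1, f.1 - f.2.1 + f.2.2)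
  else (f.1 - f.2.1 + f.2.2, f.2.1 - 2 * f.2.2, f.2.2)

theorem act_actInv (b : Bool) (f : ℤ × ℤ × ℤ) : act b (actInv b f) = f := by
  obtain ⟨A, B, C⟩ := f
  cases b <;> simp [act, actInv] <;> ring

theorem actInv_act (b : Bool) (f : ℤ × ℤ × ℤ) : actInv b (act b f) = f := by
  obtain ⟨A, B, C⟩ := f
  cases b <;> simp [act, actInv] <;> ring

def disc (f : ℤ × ℤ × ℤ) : ℤ := f.2.1 ^ 2 - 4 * f.1 * f.2.2

theorem disc_act (b : Bool) (f : ℤ × ℤ × ℤ) : disc (act b f) = disc f := by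
  obtain ⟨A, B, C⟩ := f
  cases b <;> simp [act, disc] <;> ring

theorem sq_ne_five (B : ℤ) : B ^ 2 ≠ 5 := by
  intro h
  have h1 : B < 3 := by nlinarith
  have h2 : -3 < B := by nlinarith
  interval_cases B <;> omega

theorem fst_ne_zero {f : ℤ × ℤ × ℤ} (hf : disc f = 5) : f.1 ≠ 0 := by
  intro h
  rw [disc, h] at hf
  exact sq_ne_five f.2.1 (by linarith)

theorem last_ne_zero {f : ℤ × ℤ × ℤ} (hf : disc f = 5) : f.2.2 ≠ 0 := by
  intro h
  rw [disc, h] at hf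
  exact sq_ne_five f.2.1 (by linarith)

def SameSign (f : ℤ × ℤ × ℤ) : Prop :=
  (0 < f.1 ∧ 0 < f.2.1 ∧ 0 < f.2.2) ∨ (f.1 < 0 ∧ f.2.1 < 0 ∧ f.2.2 < 0)

/-- The form has two positive roots. -/
def Opposite (f : ℤ × ℤ × ℤ) : Prop :=
  (0 < f.1 ∧ f.2.1 < 0 ∧ 0 < f.2.2) ∨ (f.1 < 0 ∧ 0 < f.2.1 ∧ f.2.2 < 0)

/-- The form has discriminant `5` and a root of each sign. -/
def Crossing (f : ℤ × ℤ × ℤ) : Prop :=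
  f = (1, 1, -1) ∨ f = (1, -1, -1) ∨ f = (-1, 1, 1) ∨ f = (-1, -1, 1)

theorem sign_trichotomy {f : ℤ × ℤ × ℤ} (hf : disc f = 5) :
    SameSign f ∨ Opposite f ∨ Crossing f := by
  have hA := fst_ne_zero hf
  have hC := last_ne_zero hf
  obtain ⟨A, B, C⟩ := f
  simp only [disc, SameSign, Opposite, Crossing, Prod.mk.injEq] at *
  have hcross : A * C < 0 → A * C = -1 := by
    intro h
    nlinarith [sq_nonneg B]
  have hB : 0 < A * C → B ≠ 0 := by
    rintro h rfl
    nlinarith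
  have hBB : A * C = -1 → B = 1 ∨ B = -1 := by
    intro h
    exact sq_eq_one_iff.1 (by nlinarith)
  rcases lt_or_gt_of_ne hA with hA | hA <;> rcases lt_or_gt_of_ne hC with hC | hC
  · have := hB (mul_pos_of_neg_of_neg hA hC)
    omega
  · have h1 := hcross (mul_neg_of_neg_of_pos hA hC)
    have h2 := hBB h1
    have h3 : C = 1 := by nlinarith
    subst h3
    omega
  · have h1 := hcross (mul_neg_of_pos_of_neg hA hC)
    have h2 := hBB h1
    have h3 : A = 1 := by nlinarith
    subst h3
    omega
  · have := hB (mul_pos hA hC)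
    omega

/-- The successive compositions of a form with the letters of `x`. -/
def along (x : ℕ → Bool) (f : ℤ × ℤ × ℤ) : ℕ → ℤ × ℤ × ℤ
  | 0 => f
  | n + 1 => act (x n) (along x f n)

theorem disc_along (x : ℕ → Bool) (f : ℤ × ℤ × ℤ) (n : ℕ) : disc (along x f n) = disc f := by
  induction n with
  | zero => rfl
  | succ n ih => rw [along, disc_act, ih]

theorem exists_along_eq (x : ℕ → Bool) (n : ℕ) (g : ℤ × ℤ × ℤ) : ∃ f, along x f n = g := by
  induction n generalizing g with
  | zero => exact ⟨g, rfl⟩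
  | succ n ih =>
    obtain ⟨f, hf⟩ := ih (actInv (x n) g)
    exact ⟨f, by rw [along, hf, act_actInv]⟩

theorem along_injective (x : ℕ → Bool) (n : ℕ) : Function.Injective fun f => along x f n := by
  induction n with
  | zero => exact fun f g h => h
  | succ n ih =>
    intro f g h
    refine ih ?_
    have := congrArg (actInv (x n)) h
    simpa only [along, actInv_act] using this

theorem SameSign.act {f : ℤ × ℤ × ℤ} (hf : SameSign f) (b : Bool) :
    SameSign (act b f) ∧ |f.2.1| < |(GoldenSpectrum.act b f).2.1| := by
  obtain ⟨A, B, C⟩ := f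
  rcases hf with h | h <;> cases b <;>
    simp only [SameSign, GoldenSpectrum.act, Bool.false_eq_true, if_false, if_true] at h ⊢ <;>
    refine ⟨by omega, ?_⟩
  · rw [abs_of_pos h.2.1, abs_of_pos] <;> omega
  · rw [abs_of_pos h.2.1, abs_of_pos] <;> omega
  · rw [abs_of_neg h.2.1, abs_of_neg] <;> omega
  · rw [abs_of_neg h.2.1, abs_of_neg] <;> omega

theorem Opposite.abs_act_lt {f : ℤ × ℤ × ℤ} {b : Bool} (h1 : Opposite f)
    (h2 : Opposite (act b f)) : |(act b f).2.1| < |f.2.1| := by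
  obtain ⟨A, B, C⟩ := f
  cases b <;>
    simp only [Opposite, act, Bool.false_eq_true, if_false, if_true] at h1 h2 ⊢ <;>
    rcases h1 with h1 | h1
  · rw [abs_of_neg h1.2.1, abs_of_neg] <;> omega
  · rw [abs_of_pos h1.2.1, abs_of_pos] <;> omega
  · rw [abs_of_neg h1.2.1, abs_of_neg] <;> omega
  · rw [abs_of_pos h1.2.1, abs_of_pos] <;> omega

theorem exists_not_opposite (x : ℕ → Bool) (f : ℤ × ℤ × ℤ) :
    ∃ n, ¬ Opposite (along x f n) := by
  by_contra! h
  have key : ∀ n : ℕ, |(along x f n).2.1| + n ≤ |f.2.1| := by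
    intro n
    induction n with
    | zero => simp [along]
    | succ n ih =>
      have h1 := h n
      have h2 := h (n + 1)
      rw [along] at h2 ⊢
      have h3 := h1.abs_act_lt h2
      push_cast
      omega
  have h1 := key (f.2.1.natAbs + 1)
  have h2 := abs_nonneg (along x f (f.2.1.natAbs + 1)).2.1
  push_cast at h1
  omega

theorem crossing_act {b : Bool} {f : ℤ × ℤ × ℤ} (hf : Crossing f) (h : ¬ SameSign (act b f)) :
    Crossing (act b f) ∧ (b = true ↔ f.1 * f.2.1 = -1) := by
  rcases hf with rfl | rfl | rfl | rfl <;> cases b <;> simp_all [Crossing, SameSign, act]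

theorem exists_sameSign {x : ℕ → Bool} (hx : Admissible x) {f : ℤ × ℤ × ℤ} (hf : disc f = 5) :
    ∃ n, SameSign (along x f n) := by
  by_contra! h
  obtain ⟨n, hn⟩ := exists_not_opposite x f
  have h0 : Crossing (along x f n) := by
    rcases sign_trichotomy ((disc_along x f n).trans hf) with h1 | h1 | h1
    · exact absurd h1 (h n)
    · exact absurd h1 hn
    · exact h1
  have hall : ∀ i, Crossing (along x f (n + i)) := by
    intro i
    induction i with
    | zero => exact h0
    | succ i ih => exact (crossing_act ih (h (n + i + 1))).1
  obtain ⟨m, hm, hxm⟩ := hx.1 n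
  obtain ⟨i, rfl⟩ := Nat.exists_eq_add_of_le hm
  have h1 := (crossing_act (hall i) (h (n + i + 1))).2
  have h2 := (crossing_act (hall (i + 1)) (h (n + (i + 1) + 1))).2
  rw [← add_assoc, ← hxm] at h2
  have h3 := hall i
  have h4 : along x f (n + i + 1) = act (x (n + i)) (along x f (n + i)) := rfl
  have h5 := hall (i + 1)
  rw [← add_assoc, h4] at h5
  rw [h4] at h2
  revert h1 h2 h5
  generalize x (n + i) = b
  rcases h3 with h3 | h3 | h3 | h3 <;> rw [h3] <;> cases b <;> simp [act, Crossing]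

/-- The forms with coefficients bounded by `1000`. -/
def Bounded (f : ℤ × ℤ × ℤ) : Prop :=
  |f.1| ≤ 1000 ∧ |f.2.1| ≤ 1000 ∧ |f.2.2| ≤ 1000

theorem finite_setOf_bounded : {f | Bounded f}.Finite := by
  refine (Set.finite_Icc ((-1000, -1000, -1000) : ℤ × ℤ × ℤ) (1000, 1000, 1000)).subset ?_
  rintro ⟨A, B, C⟩ ⟨h1, h2, h3⟩
  rw [abs_le] at h1 h2 h3
  exact ⟨⟨h1.1, h2.1, h3.1⟩, ⟨h1.2, h2.2, h3.2⟩⟩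

theorem finite_setOf_along_bounded {x : ℕ → Bool} (hx : Admissible x) {f : ℤ × ℤ × ℤ}
    (hf : disc f = 5) : {n | Bounded (along x f n)}.Finite := by
  obtain ⟨n₀, hn₀⟩ := exists_sameSign hx hf
  have key : ∀ i : ℕ, SameSign (along x f (n₀ + i)) ∧ (i : ℤ) ≤ |(along x f (n₀ + i)).2.1| := by
    intro i
    induction i with
    | zero => exact ⟨hn₀, by simp⟩
    | succ i ih =>
      obtain ⟨h1, h2⟩ := ih.1.act (x (n₀ + i))
      refine ⟨h1, ?_⟩
      have h3 : along x f (n₀ + (i + 1)) = act (x (n₀ + i)) (along x f (n₀ + i)) := rfl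
      rw [h3]
      push_cast
      omega
  refine (Set.finite_le_nat (n₀ + 1000)).subset fun n hn => ?_
  by_contra hle
  have hlt : n₀ + 1000 < n := not_le.1 hle
  obtain ⟨i, rfl⟩ := Nat.exists_eq_add_of_le (show n₀ ≤ n by omega)
  have h1 := (key i).2
  have h2 := hn.2.1
  omega

/-- The polar form of `f` at the points with coordinates `z` and `-w`, up to sign. -/
def polar (f : ℤ × ℤ × ℤ) (z w : ℝ) : ℝ :=
  2 * f.1 * z * w + f.2.1 * (w - z) - 2 * f.2.2 * (1 - z) * (1 - w)

/-- The determinant of the points with coordinates `z` and `-w`. -/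
def gap (z w : ℝ) : ℝ := z + w - 2 * z * w

theorem gap_nonneg {z w : ℝ} (hz : z ∈ Set.Icc (0 : ℝ) 1) (hw : w ∈ Set.Icc (0 : ℝ) 1) :
    0 ≤ gap z w := by
  obtain ⟨hz0, hz1⟩ := hz
  obtain ⟨hw0, hw1⟩ := hw
  unfold gap
  nlinarith [mul_nonneg hz0 (sub_nonneg.2 hw1), mul_nonneg hw0 (sub_nonneg.2 hz1)]

theorem gap_pos {z w : ℝ} (hz : z ∈ Set.Ioo (0 : ℝ) 1) (hw : w ∈ Set.Icc (0 : ℝ) 1) :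
    0 < gap z w := by
  obtain ⟨hz0, hz1⟩ := hz
  obtain ⟨hw0, hw1⟩ := hw
  unfold gap
  rcases hw0.eq_or_lt with rfl | hw0
  · linarith
  · nlinarith [mul_nonneg hz0.le (sub_nonneg.2 hw1), mul_pos hw0 (sub_pos.2 hz1)]

theorem polar_ne_zero {f : ℤ × ℤ × ℤ} (hf : disc f = 5) {z w : ℝ} (hz : z ∈ Set.Icc (0 : ℝ) 1)
    (hw : w ∈ Set.Icc (0 : ℝ) 1) (h : gap z w = 0) : polar f z w ≠ 0 := by
  obtain ⟨hz0, hz1⟩ := hz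
  obtain ⟨hw0, hw1⟩ := hw
  unfold gap at h
  have h1 : z * (1 - w) = 0 := by
    nlinarith [mul_nonneg hz0 (sub_nonneg.2 hw1), mul_nonneg hw0 (sub_nonneg.2 hz1)]
  have h2 : w * (1 - z) = 0 := by linarith
  rcases mul_eq_zero.1 h1 with rfl | h3
  · have : w = 0 := by linarith
    subst this
    simpa [polar] using last_ne_zero hf
  · have hw : w = 1 := by linarith
    subst hw
    have hz : z = 1 := by linarith
    subst hz
    simpa [polar] using fst_ne_zero hf

/-- The cross ratio attached to the form `f` and the points with coordinates `z` and `-w` is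
less than `r`. -/
def Near (r : ℝ) (f : ℤ × ℤ × ℤ) (z w : ℝ) : Prop :=
  |polar f z w - √5 * gap z w| < r * (√5 * gap z w)

theorem exists_polar_act (b : Bool) (f : ℤ × ℤ × ℤ) {z w : ℝ} (hz : z ∈ Set.Icc (0 : ℝ) 1)
    (hw : w ∈ Set.Icc (0 : ℝ) 1) :
    ∃ κ > 0, polar f (branch b z) w = κ * polar (act b f) z (branch b w) ∧
      gap (branch b z) w = κ * gap z (branch b w) := by
  obtain ⟨hz0, hz1⟩ := hz
  obtain ⟨hw0, hw1⟩ := hw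
  cases b
  · have h1 : 0 < 1 + z := by linarith
    have h2 : 0 < 1 + w := by linarith
    refine ⟨(1 + w) / (1 + z), by positivity, ?_, ?_⟩
    · simp only [polar, branch, act, Bool.false_eq_true, if_false]
      push_cast
      field_simp
      ring
    · simp only [gap, branch, Bool.false_eq_true, if_false]
      field_simp
      ring
  · have h1 : 0 < 2 - z := by linarith
    have h2 : 0 < 2 - w := by linarith
    have h1' := h1.ne'
    have h2' := h2.ne'
    refine ⟨(2 - w) / (2 - z), by positivity, ?_, ?_⟩
    · simp only [polar, branch, act, if_true]
      push_cast
      field_simp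
      ring
    · simp only [gap, branch, if_true]
      field_simp
      ring

theorem near_act (r : ℝ) (b : Bool) (f : ℤ × ℤ × ℤ) {z w : ℝ} (hz : z ∈ Set.Icc (0 : ℝ) 1)
    (hw : w ∈ Set.Icc (0 : ℝ) 1) : Near r f (branch b z) w ↔ Near r (act b f) z (branch b w) := by
  obtain ⟨κ, hκ, h1, h2⟩ := exists_polar_act b f hz hw
  unfold Near
  rw [h1, h2, show κ * polar (act b f) z (branch b w) - √5 * (κ * gap z (branch b w))
      = κ * (polar (act b f) z (branch b w) - √5 * gap z (branch b w)) by ring, abs_mul,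
    abs_of_pos hκ, show r * (√5 * (κ * gap z (branch b w)))
      = κ * (r * (√5 * gap z (branch b w))) by ring]
  exact mul_lt_mul_iff_right₀ hκ

theorem near_along (r : ℝ) (x : ℕ → Bool) (f : ℤ × ℤ × ℤ) (n : ℕ) :
    Near r (along x f n) (future x n) (past x n) ↔ Near r f (future x 0) 1 := by
  induction n with
  | zero => rfl
  | succ n ih =>
    rw [← ih, future_eq x n, near_act r _ _ (future_mem x _) (past_mem x n)]
    rfl

theorem Near.mono {r s : ℝ} (hrs : r ≤ s) {f : ℤ × ℤ × ℤ} {z w : ℝ}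
    (hz : z ∈ Set.Icc (0 : ℝ) 1) (hw : w ∈ Set.Icc (0 : ℝ) 1) (h : Near r f z w) :
    Near s f z w := by
  refine h.trans_le (mul_le_mul_of_nonneg_right hrs ?_)
  have := gap_nonneg hz hw
  positivity

theorem Near.abs_polar_le {f : ℤ × ℤ × ℤ} {z w : ℝ} (hz : z ∈ Set.Icc (0 : ℝ) 1)
    (hw : w ∈ Set.Icc (0 : ℝ) 1) (h : Near 11 f z w) : |polar f z w| ≤ 27 * gap z w := by
  have hg := gap_nonneg hz hw
  have h5 : √5 ≤ 9 / 4 := by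
    rw [Real.sqrt_le_left (by norm_num)]
    norm_num
  have h6 : √5 * gap z w ≤ 9 / 4 * gap z w := mul_le_mul_of_nonneg_right h5 hg
  rw [Near, abs_lt] at h
  have h7 : 0 ≤ √5 * gap z w := by positivity
  rw [abs_le]
  constructor <;> linarith [h.1, h.2]

theorem coeff_le_of_abs_polar_le {A B C : ℤ} (hf : disc (A, B, C) = 5) (hA : 0 < A) (hB : B < 0)
    (hC : 0 < C) (h1 : 0 < 2 * A + B) (h2 : 0 < A + B + C) {z w : ℝ}
    (hz : z ∈ Set.Icc (1 / 2 : ℝ) 1) (hw : w ∈ Set.Icc (0 : ℝ) 1) (hg : 0 < gap z w)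
    (h : polar (A, B, C) z w ≤ 27 * gap z w) : A ≤ 1000 ∧ -B ≤ 1000 ∧ C ≤ 1000 := by
  simp only [disc] at hf
  have hq : B + 2 * C < 0 := by
    by_contra hq
    nlinarith
  obtain ⟨p, hp⟩ : ∃ p, p = A + B + C := ⟨_, rfl⟩
  obtain ⟨q, hq'⟩ : ∃ q, q = -(B + 2 * C) := ⟨_, rfl⟩
  have eA : A = p + q + C := by linarith
  have eB : B = -(q + 2 * C) := by linarith
  subst eA
  subst eB
  have hp0 : 0 < p := by linarith
  have hq0 : 0 < q := by linarith
  have hpR : (0 : ℝ) < p := by exact_mod_cast hp0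
  have hqR : (0 : ℝ) < q := by exact_mod_cast hq0
  have hCR : (0 : ℝ) < C := by exact_mod_cast hC
  obtain ⟨hz0, hz1⟩ := hz
  obtain ⟨hw0, hw1⟩ := hw
  have key : (q : ℝ) * gap z w ≤ polar (p + q + C, -(q + 2 * C), C) z w := by
    have e : polar (p + q + C, -(q + 2 * C), C) z w - q * gap z w
        = 2 * p * (z * w) + 2 * q * (w * (2 * z - 1)) + 2 * C * (2 * z - 1) := by
      simp only [polar, gap]
      push_cast
      ring
    have h3 : 0 ≤ 2 * z - 1 := by linarith
    have h4 : 0 ≤ z := by linarith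
    have : 0 ≤ 2 * p * (z * w) + 2 * q * (w * (2 * z - 1)) + 2 * C * (2 * z - 1) := by positivity
    linarith
  have hq27 : (q : ℝ) ≤ 27 := le_of_mul_le_mul_right (key.trans h) hg
  have hq27' : q ≤ 27 := by exact_mod_cast hq27
  have hpC : 4 * (p * C) = q ^ 2 - 5 := by nlinarith
  have hpC' : p * C ≤ 181 := by nlinarith
  have hp181 : p ≤ 181 := by nlinarith
  have hC181 : C ≤ 181 := by nlinarith
  refine ⟨by linarith, by linarith, by linarith⟩

theorem polar_neg (A B C : ℤ) (z w : ℝ) : polar (-A, -B, -C) z w = -polar (A, B, C) z w := by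
  simp only [polar]
  push_cast
  ring

theorem polar_swap (A B C : ℤ) (z w : ℝ) :
    polar (C, B, A) (1 - z) (1 - w) = -polar (A, B, C) z w := by
  simp only [polar]
  ring

theorem gap_swap (z w : ℝ) : gap (1 - z) (1 - w) = gap z w := by
  simp only [gap]
  ring

theorem bounded_of_opposite {f : ℤ × ℤ × ℤ} (hf : disc f = 5) (hopp : Opposite f) {b : Bool}
    (hss : SameSign (act b f)) {z w : ℝ} (hz : z ∈ Set.Icc (0 : ℝ) 1)
    (hw : w ∈ Set.Icc (0 : ℝ) 1) (hg : 0 < gap (branch b z) w)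
    (h : |polar f (branch b z) w| ≤ 27 * gap (branch b z) w) : Bounded f := by
  obtain ⟨A, B, C⟩ := f
  rw [abs_le] at h
  have hw' : 1 - w ∈ Set.Icc (0 : ℝ) 1 := ⟨by linarith [hw.2], by linarith [hw.1]⟩
  have hfneg : disc (-A, -B, -C) = 5 := by simpa [disc] using hf
  have hfswap : disc (C, B, A) = 5 := by
    simp only [disc] at hf ⊢
    linarith
  have hfsn : disc (-C, -B, -A) = 5 := by
    simp only [disc] at hf ⊢
    linarith
  have hbz := branch_mem (b := b) hz
  simp only [Bounded]
  cases b
  · have hhalf : 1 - branch false z ∈ Set.Icc (1 / 2 : ℝ) 1 :=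
      ⟨by linarith [branch_false_le_half hz], by linarith [hbz.1]⟩
    rw [← gap_swap] at hg
    simp only [Opposite, SameSign, act, Bool.false_eq_true, if_false] at hopp hss
    rcases hopp with ho | ho
    · obtain ⟨h1, h2, h3⟩ := coeff_le_of_abs_polar_le hfswap (by omega) (by omega) (by omega)
        (by omega) (by omega) hhalf hw' hg (by rw [polar_swap, gap_swap]; linarith [h.1])
      simp only [abs_le]
      omega
    · obtain ⟨h1, h2, h3⟩ := coeff_le_of_abs_polar_le hfsn (by omega) (by omega) (by omega)
        (by omega) (by omega) hhalf hw' hg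
        (by rw [polar_neg, polar_swap, gap_swap]; linarith [h.2])
      simp only [abs_le]
      omega
  · have hhalf : branch true z ∈ Set.Icc (1 / 2 : ℝ) 1 := ⟨half_le_branch_true hz, hbz.2⟩
    simp only [Opposite, SameSign, act, if_true] at hopp hss
    rcases hopp with ho | ho
    · obtain ⟨h1, h2, h3⟩ := coeff_le_of_abs_polar_le hf (by omega) (by omega) (by omega)
        (by omega) (by omega) hhalf hw hg h.2
      simp only [abs_le]
      omega
    · obtain ⟨h1, h2, h3⟩ := coeff_le_of_abs_polar_le hfneg (by omega) (by omega) (by omega)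
        (by omega) (by omega) hhalf hw hg (by rw [polar_neg]; linarith [h.1])
      simp only [abs_le]
      omega

theorem Crossing.bounded {f : ℤ × ℤ × ℤ} (hf : Crossing f) : Bounded f := by
  rcases hf with rfl | rfl | rfl | rfl <;> simp [Bounded]

theorem bounded_of_sameSign {f : ℤ × ℤ × ℤ} (hf : disc f = 5) (hss : SameSign f) {z : ℝ}
    (hz : z ∈ Set.Ioo (0 : ℝ) 1) (h : |polar f z 1| ≤ 27 * gap z 1) : Bounded f := by
  obtain ⟨hz0, hz1⟩ := hz
  have hz1' : 0 < 1 - z := by linarith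
  have core : ∀ A B C : ℤ, disc (A, B, C) = 5 → 0 < A → 0 < B → 0 < C →
      polar (A, B, C) z 1 ≤ 27 * gap z 1 → A ≤ 1000 ∧ B ≤ 1000 ∧ C ≤ 1000 := by
    intro A B C hd hA hB hC h
    simp only [polar, gap, disc] at h hd
    have hAR : (0 : ℝ) < A := by exact_mod_cast hA
    have h1 : (B : ℝ) * (1 - z) ≤ 27 * (1 - z) := by
      have : 0 < (A : ℝ) * z := by positivity
      linarith
    have h2 : (B : ℝ) ≤ 27 := le_of_mul_le_mul_right h1 hz1'
    have h3 : B ≤ 27 := by exact_mod_cast h2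
    have h4 : A * C ≤ 181 := by nlinarith
    refine ⟨by nlinarith, by linarith, by nlinarith⟩
  obtain ⟨A, B, C⟩ := f
  rw [abs_le] at h
  rcases hss with hs | hs
  · obtain ⟨h1, h2, h3⟩ := core A B C hf hs.1 hs.2.1 hs.2.2 h.2
    simp only at hs
    simp only [Bounded, abs_le]
    omega
  · simp only at hs
    obtain ⟨h1, h2, h3⟩ := core (-A) (-B) (-C) (by simpa [disc] using hf) (by omega) (by omega)
      (by omega) (by rw [polar_neg]; linarith [h.1])
    simp only [Bounded, abs_le]
    omega

theorem exists_along_bounded {x : ℕ → Bool} (hx : Admissible x) {f : ℤ × ℤ × ℤ}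
    (hf : disc f = 5) (h : Near 11 f (future x 0) 1) : ∃ n, Bounded (along x f n) := by
  have hex := exists_sameSign hx hf
  have hss := Nat.find_spec hex
  rcases hn : Nat.find hex with _ | n
  · rw [hn] at hss
    exact ⟨0, bounded_of_sameSign hf hss (future_mem_Ioo hx 0)
      (h.abs_polar_le (future_mem x 0) (by simp))⟩
  · rw [hn] at hss
    have hns : ¬ SameSign (along x f n) := Nat.find_min hex (by omega)
    refine ⟨n, ?_⟩
    have hd := (disc_along x f n).trans hf
    rcases sign_trichotomy hd with h1 | h1 | h1
    · exact absurd h1 hns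
    · have h2 := ((near_along 11 x f n).2 h).abs_polar_le (future_mem x n) (past_mem x n)
      have h3 := gap_pos (future_mem_Ioo hx n) (past_mem x n)
      rw [future_eq] at h2 h3
      exact bounded_of_opposite hd h1 hss (future_mem x _) (past_mem x n) h3 h2
    · exact h1.bounded

theorem irrational_sqrt_five : Irrational √5 := by
  have := Nat.Prime.irrational_sqrt (show Nat.Prime 5 by norm_num)
  simpa using this

theorem irrational_goldenRat : Irrational goldenRat := Real.goldenRatio_irrational

theorem denom_ne_zero (A : Matrix.SpecialLinearGroup (Fin 2) ℤ) {x : ℝ} (hx : Irrational x) :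
    (A.1 1 0 : ℝ) * x + A.1 1 1 ≠ 0 := by
  intro h
  have hdet := A.2
  rw [Matrix.det_fin_two] at hdet
  by_cases hc : A.1 1 0 = 0
  · rw [hc, Int.cast_zero, zero_mul, zero_add, Int.cast_eq_zero] at h
    rw [hc, h] at hdet
    simp at hdet
  · have h1 : Irrational ((A.1 1 0 : ℝ) * x + A.1 1 1) := by
      exact (hx.intCast_mul hc).add_intCast _
    exact h1 ⟨0, by rw [h]; simp⟩

theorem mob_mul (A B : Matrix.SpecialLinearGroup (Fin 2) ℤ) {x : ℝ} (hx : Irrational x) :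
    mob (A * B) x = mob A (mob B x) := by
  have h1 := denom_ne_zero B hx
  have h2 := denom_ne_zero (A * B) hx
  simp only [mob, Matrix.SpecialLinearGroup.coe_mul, Matrix.mul_apply, Fin.sum_univ_two] at h2 ⊢
  push_cast at h2 ⊢
  have h3 : (A.1 1 0 : ℝ) * (((B.1 0 0 : ℝ) * x + B.1 0 1) / ((B.1 1 0 : ℝ) * x + B.1 1 1))
      + A.1 1 1 ≠ 0 := by
    intro h
    rw [← mul_div_assoc, div_add' _ _ _ h1] at h
    have h4 := (div_eq_zero_iff.1 h).resolve_right h1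
    apply h2
    linear_combination h4
  rw [div_eq_div_iff h2 h3]
  field_simp
  ring

theorem mob_mem_orbit (A : Matrix.SpecialLinearGroup (Fin 2) ℤ) {α : ℝ}
    (hα : α ∈ mobOrbit goldenRat) : mob A α ∈ mobOrbit goldenRat := by
  obtain ⟨B, rfl⟩ := hα
  exact ⟨A * B, mob_mul A B irrational_goldenRat⟩

theorem add_one_mem_orbit {α : ℝ} (hα : α ∈ mobOrbit goldenRat) :
    α + 1 ∈ mobOrbit goldenRat := by
  have := mob_mem_orbit ⟨!![1, 1; 0, 1], by simp⟩ hα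
  simpa [mob] using this

theorem sub_one_mem_orbit {α : ℝ} (hα : α ∈ mobOrbit goldenRat) :
    α - 1 ∈ mobOrbit goldenRat := by
  have := mob_mem_orbit ⟨!![1, -1; 0, 1], by simp⟩ hα
  simpa [mob, sub_eq_add_neg] using this

theorem div_one_add_mem_orbit {α : ℝ} (hα : α ∈ mobOrbit goldenRat) :
    α / (1 + α) ∈ mobOrbit goldenRat := by
  have := mob_mem_orbit ⟨!![1, 0; 1, 1], by simp⟩ hα
  simpa [mob, add_comm] using this

theorem div_one_sub_mem_orbit {α : ℝ} (hα : α ∈ mobOrbit goldenRat) :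
    α / (1 - α) ∈ mobOrbit goldenRat := by
  have := mob_mem_orbit ⟨!![1, 0; -1, 1], by simp⟩ hα
  simpa [mob, sub_eq_add_neg, add_comm] using this

/-- A root of the form `f` of discriminant `5`. -/
noncomputable def root (f : ℤ × ℤ × ℤ) : ℝ := (-f.2.1 + √5) / (2 * f.1)

/-- The forms of discriminant `5` which correspond to the points of the orbit. -/
def goldenForms : Set (ℤ × ℤ × ℤ) := {f | disc f = 5 ∧ root f ∈ mobOrbit goldenRat}

theorem irrational_root {f : ℤ × ℤ × ℤ} (hf : disc f = 5) : Irrational (root f) := by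
  have h1 : Irrational (-f.2.1 + √5) := by
    have := irrational_sqrt_five.intCast_add (-f.2.1)
    simpa using this
  have h2 := h1.div_intCast (m := 2 * f.1) (by simpa using fst_ne_zero hf)
  simpa [root] using h2

theorem root_sq {f : ℤ × ℤ × ℤ} (hf : disc f = 5) :
    (f.1 : ℝ) * root f ^ 2 + f.2.1 * root f + f.2.2 = 0 := by
  have hA : (f.1 : ℝ) ≠ 0 := by exact_mod_cast fst_ne_zero hf
  have hd : (f.2.1 : ℝ) ^ 2 - 4 * f.1 * f.2.2 = 5 := by exact_mod_cast hf
  have h5 : √5 ^ 2 = 5 := Real.sq_sqrt (by norm_num)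
  unfold root
  field_simp
  linear_combination h5 - hd

theorem root_act_true {f : ℤ × ℤ × ℤ} (hf : disc f = 5) : root (act true f) = root f - 1 := by
  have hA : (f.1 : ℝ) ≠ 0 := by exact_mod_cast fst_ne_zero hf
  simp only [root, act, if_true]
  push_cast
  field_simp
  ring

theorem root_act_false {f : ℤ × ℤ × ℤ} (hf : disc f = 5) :
    root (act false f) = root f / (1 - root f) := by
  have hA : (f.1 : ℝ) ≠ 0 := by exact_mod_cast fst_ne_zero hf
  have hA' : (f.1 : ℝ) + f.2.1 + f.2.2 ≠ 0 := by
    have := fst_ne_zero ((disc_act false f).trans hf)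
    simp only [act, Bool.false_eq_true, if_false] at this
    exact_mod_cast this
  have hd : (f.2.1 : ℝ) ^ 2 - 4 * f.1 * f.2.2 = 5 := by exact_mod_cast hf
  have h5 : √5 ^ 2 = 5 := Real.sq_sqrt (by norm_num)
  have h1 : 1 - root f ≠ 0 := fun h =>
    irrational_root hf ⟨1, by push_cast; linarith⟩
  rw [eq_div_iff h1]
  simp only [root, act, Bool.false_eq_true, if_false]
  push_cast
  field_simp
  linear_combination hd - h5

theorem act_mem_goldenForms {b : Bool} {f : ℤ × ℤ × ℤ} :
    act b f ∈ goldenForms ↔ f ∈ goldenForms := by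
  simp only [goldenForms, Set.mem_ofPred_eq, disc_act]
  refine and_congr_right fun hf => ?_
  cases b
  · rw [root_act_false hf]
    refine ⟨fun h => ?_, div_one_sub_mem_orbit⟩
    have h1 : 1 - root f ≠ 0 := fun h => irrational_root hf ⟨1, by push_cast; linarith⟩
    have h2 := div_one_add_mem_orbit h
    have h3 : root f / (1 - root f) / (1 + root f / (1 - root f)) = root f := by
      field_simp
      ring
    rwa [h3] at h2
  · rw [root_act_true hf]
    refine ⟨fun h => ?_, sub_one_mem_orbit⟩
    simpa using add_one_mem_orbit h

theorem along_mem_goldenForms (x : ℕ → Bool) (f : ℤ × ℤ × ℤ) (n : ℕ) :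
    along x f n ∈ goldenForms ↔ f ∈ goldenForms := by
  induction n with
  | zero => rfl
  | succ n ih => rw [along, act_mem_goldenForms, ih]

theorem root_injOn : Set.InjOn root goldenForms := by
  rintro ⟨A, B, C⟩ hf ⟨A', B', C'⟩ hf' h
  have hA := fst_ne_zero hf.1
  have hA' := fst_ne_zero hf'.1
  have hd := hf.1
  have hd' := hf'.1
  simp only [disc] at hA hA' hd hd'
  have hAR : (A : ℝ) ≠ 0 := by exact_mod_cast hA
  have hAR' : (A' : ℝ) ≠ 0 := by exact_mod_cast hA'
  simp only [root] at h
  rw [div_eq_div_iff (by simpa) (by simpa)] at h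
  have h1 : ((A' - A : ℤ) : ℝ) * √5 = ((A' * B - A * B' : ℤ) : ℝ) := by
    push_cast
    linear_combination h / 2
  have hAA : A' - A = 0 := by
    by_contra hne
    exact (irrational_sqrt_five.intCast_mul hne).ne_int _ h1
  have hAA' : A' = A := by linarith
  subst hAA'
  have h2 : A' * B - A' * B' = 0 := by
    rw [hAA] at h1
    push_cast at h1
    have : ((A' * B - A' * B' : ℤ) : ℝ) = 0 := by
      push_cast
      linarith
    exact_mod_cast this
  have hBB : B = B' := mul_left_cancel₀ hA (by linarith)
  subst hBB
  have hCC : C = C' := mul_left_cancel₀ hA (by linarith)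
  rw [hCC]

theorem exists_root_eq {α : ℝ} (hα : α ∈ mobOrbit goldenRat) :
    ∃ f ∈ goldenForms, root f = α := by
  obtain ⟨M, rfl⟩ := id hα
  have hdet := M.2
  rw [Matrix.det_fin_two] at hdet
  have hden := denom_ne_zero M irrational_goldenRat
  obtain ⟨p, hp⟩ : ∃ p, p = M.1 0 0 := ⟨_, rfl⟩
  obtain ⟨q, hq⟩ : ∃ q, q = M.1 0 1 := ⟨_, rfl⟩
  obtain ⟨r, hr⟩ : ∃ r, r = M.1 1 0 := ⟨_, rfl⟩
  obtain ⟨s, hs⟩ : ∃ s, s = M.1 1 1 := ⟨_, rfl⟩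
  let f : ℤ × ℤ × ℤ := (s ^ 2 + s * r - r ^ 2, -2 * s * q - s * p - q * r + 2 * r * p,
    q ^ 2 + q * p - p ^ 2)
  rw [← hp, ← hq, ← hr, ← hs] at hdet
  rw [← hr, ← hs] at hden
  have hd : disc f = 5 := by
    have : disc f = 5 * (p * s - q * r) ^ 2 := by
      simp only [disc, f]
      ring
    rw [this, hdet]
    norm_num
  have hdetR : (p : ℝ) * s - q * r = 1 := by exact_mod_cast hdet
  have h5 : √5 ^ 2 = 5 := Real.sq_sqrt (by norm_num)
  have hroot : root f = mob M goldenRat := by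
    have hA : (f.1 : ℝ) ≠ 0 := by exact_mod_cast fst_ne_zero hd
    simp only [mob, ← hp, ← hq, ← hr, ← hs]
    rw [root, div_eq_div_iff (mul_ne_zero two_ne_zero hA) hden]
    simp only [f, goldenRat]
    push_cast
    linear_combination (-(r : ℝ) / 2) * h5 * (-1) + (√5 * ((r : ℝ) / 2 + s)) * hdetR * (-1)
      + (-(5 / 2) * (r : ℝ)) * hdetR
  exact ⟨f, ⟨hd, hroot ▸ hα⟩, hroot⟩

theorem galConj_root {f : ℤ × ℤ × ℤ} (hf : disc f = 5) :
    galConj (root f) = (-f.2.1 - √5) / (2 * f.1) := by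
  have hA0 := fst_ne_zero hf
  have hA : (f.1 : ℝ) ≠ 0 := by exact_mod_cast hA0
  have hd : (f.2.1 : ℝ) ^ 2 - 4 * f.1 * f.2.2 = 5 := by exact_mod_cast hf
  have h5 : √5 ^ 2 = 5 := Real.sq_sqrt (by norm_num)
  have h5pos : 0 < √5 := by positivity
  have hirr := irrational_root hf
  have hroot := root_sq hf
  have hex : ∃ σ, IsGalConj (root f) σ := by
    refine ⟨(-f.2.1 - √5) / (2 * f.1), hirr, ?_, f.1, f.2.1, f.2.2, by exact_mod_cast hA0,
      by exact_mod_cast hroot, ?_⟩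
    · rw [root, Ne, div_left_inj' (by simpa)]
      intro h
      linarith
    · push_cast
      field_simp
      linear_combination h5 - hd
  rw [galConj, dif_pos hex]
  obtain ⟨-, hne, a, b, c, ha, h1, h2⟩ := hex.choose_spec
  set σ := hex.choose
  have haR : (a : ℝ) ≠ 0 := by exact_mod_cast ha
  have hsum : (a : ℝ) * (σ + root f) + b = 0 := by
    have : (σ - root f) * ((a : ℝ) * (σ + root f) + b) = 0 := by linear_combination h2 - h1
    exact (mul_eq_zero.1 this).resolve_left (sub_ne_zero.2 hne)
  have hprop : b * f.1 - a * f.2.1 = 0 := by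
    by_contra hne'
    refine (hirr.ratCast_mul hne').ne_rat (a * f.2.2 - c * f.1) ?_
    push_cast
    linear_combination (f.1 : ℝ) * h1 - (a : ℝ) * hroot
  have hpropR : (b : ℝ) * f.1 - a * f.2.1 = 0 := by exact_mod_cast hprop
  have hσ : (f.1 : ℝ) * (σ + root f) + f.2.1 = 0 := by
    refine (mul_eq_zero.1 ?_).resolve_left haR
    linear_combination (f.1 : ℝ) * hsum - hpropR
  have e : (f.1 : ℝ) * root f = (-f.2.1 + √5) / 2 := by
    rw [root]
    field_simp
  rw [eq_div_iff (by simpa)]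
  linear_combination 2 * hσ - 2 * e

theorem qiHeight_root_mul {f : ℤ × ℤ × ℤ} (hf : disc f = 5) (y : ℝ) :
    qiHeight (root f) * |y - root f| = |2 * f.1 * y + f.2.1 - √5| / √5 := by
  have hA : (f.1 : ℝ) ≠ 0 := by exact_mod_cast fst_ne_zero hf
  have h5pos : 0 < √5 := by positivity
  have hA' : 0 < |(f.1 : ℝ)| := abs_pos.2 hA
  have e1 : root f - galConj (root f) = √5 / f.1 := by
    rw [galConj_root hf, root]
    field_simp
    ring
  have e2 : 2 * f.1 * y + f.2.1 - √5 = 2 * f.1 * (y - root f) := by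
    rw [root]
    field_simp
    ring
  rw [qiHeight, e1, e2, abs_div, abs_mul, abs_mul, abs_of_pos h5pos, abs_two]
  field_simp

/-- The forms corresponding to the points of the orbit which approximate `y` with a constant less
than `r`. -/
def closeForms (y r : ℝ) : Set (ℤ × ℤ × ℤ) :=
  {f | f ∈ goldenForms ∧ |2 * f.1 * y + f.2.1 - √5| < r * √5}

theorem image_root_closeForms (y r : ℝ) : root '' closeForms y r
    = {α | α ∈ mobOrbit goldenRat ∧ qiHeight α * |y - α| < r} := by
  have h5pos : 0 < √5 := by positivity
  ext α
  constructor
  · rintro ⟨f, ⟨hf, h⟩, rfl⟩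
    refine ⟨hf.2, ?_⟩
    rwa [qiHeight_root_mul hf.1, div_lt_iff₀ h5pos]
  · rintro ⟨hα, h⟩
    obtain ⟨f, hf, rfl⟩ := exists_root_eq hα
    rw [qiHeight_root_mul hf.1, div_lt_iff₀ h5pos] at h
    exact ⟨f, ⟨hf, h⟩, rfl⟩

theorem finite_closeForms_iff (y r : ℝ) : (closeForms y r).Finite ↔
    {α | α ∈ mobOrbit goldenRat ∧ qiHeight α * |y - α| < r}.Finite := by
  rw [← image_root_closeForms, Set.finite_image_iff (root_injOn.mono fun f hf => hf.1)]

theorem finite_closeForms_sub_one (y r : ℝ) :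
    (closeForms (y - 1) r).Finite ↔ (closeForms y r).Finite := by
  have h : closeForms (y - 1) r = act true '' closeForms y r := by
    ext f
    have key : ∀ g : ℤ × ℤ × ℤ, act true g ∈ closeForms (y - 1) r ↔ g ∈ closeForms y r := by
      intro g
      refine and_congr act_mem_goldenForms ?_
      simp only [act, if_true]
      push_cast
      rw [show 2 * (g.1 : ℝ) * (y - 1) + (2 * g.1 + g.2.1) - √5 = 2 * g.1 * y + g.2.1 - √5 by ring]
    constructor
    · intro hf
      exact ⟨actInv true f, (key _).1 (by rwa [act_actInv]), act_actInv true f⟩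
    · rintro ⟨g, hg, rfl⟩
      exact (key g).2 hg
  rw [h]
  exact Set.finite_image_iff
    (Function.LeftInverse.injective (g := actInv true) (actInv_act true)).injOn

theorem approxConst_eq_of_isThreshold {y L : ℝ}
    (h : IsThreshold (fun r => (closeForms y r).Finite) L) :
    approxConst (mobOrbit goldenRat) y = L := by
  have hnn : ∀ α, 0 ≤ qiHeight α * |y - α| := fun α => by
    unfold qiHeight
    positivity
  have hbdd : ∀ F : Finset ℝ, BddBelow (Set.range fun α : {α : ℝ // α ∈ mobOrbit goldenRat ∧ α ∉ F}
      => qiHeight α.1 * |y - α.1|) := fun F => ⟨0, by rintro _ ⟨α, rfl⟩; exact hnn _⟩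
  have hgt : ∀ (F : Finset ℝ), ∀ r > L, ∃ α : {α : ℝ // α ∈ mobOrbit goldenRat ∧ α ∉ F},
      qiHeight α.1 * |y - α.1| < r := by
    intro F r hr
    have h1 : ¬ (closeForms y r).Finite := h.2 r hr
    rw [finite_closeForms_iff] at h1
    obtain ⟨α, hα, hαF⟩ := Set.Infinite.exists_notMem_finset h1 F
    exact ⟨⟨α, hα.1, hαF⟩, hα.2⟩
  have hle : ∀ F : Finset ℝ, ⨅ α : {α : ℝ // α ∈ mobOrbit goldenRat ∧ α ∉ F},
      qiHeight α.1 * |y - α.1| ≤ L := by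
    intro F
    refine le_of_forall_gt_imp_ge_of_dense fun r hr => ?_
    obtain ⟨α, hα⟩ := hgt F r hr
    exact (ciInf_le (hbdd F) α).trans hα.le
  refine le_antisymm (ciSup_le hle) (le_of_forall_lt_imp_le_of_dense fun r hr => ?_)
  have h1 : (closeForms y r).Finite := h.1 r hr
  rw [finite_closeForms_iff] at h1
  have hne : Nonempty {α : ℝ // α ∈ mobOrbit goldenRat ∧ α ∉ h1.toFinset} :=
    (hgt h1.toFinset (L + 1) (by linarith)).nonempty
  refine le_trans ?_ (le_ciSup ⟨L, by rintro _ ⟨F, rfl⟩; exact hle F⟩ h1.toFinset)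
  refine le_ciInf fun α => ?_
  by_contra hlt
  exact α.2.2 (h1.mem_toFinset.2 ⟨α.2.1, not_le.1 hlt⟩)


/-- A continuous truncation of the cross ratio attached to the form `f` and the points with
coordinates `z` and `-w`. -/
noncomputable def capped (f : ℤ × ℤ × ℤ) (p : ℝ × ℝ) : ℝ :=
  |polar f p.1 p.2 - √5 * gap p.1 p.2| /
    max (√5 * gap p.1 p.2) (|polar f p.1 p.2 - √5 * gap p.1 p.2| / 11)

theorem capped_nonneg (f : ℤ × ℤ × ℤ) (p : ℝ × ℝ) : 0 ≤ capped f p :=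
  div_nonneg (abs_nonneg _) (le_max_of_le_right (by positivity))

theorem capped_lt_iff {f : ℤ × ℤ × ℤ} {z w r : ℝ} (hg : 0 < gap z w) (hr : r ≤ 11) :
    capped f (z, w) < r ↔ Near r f z w := by
  have hD : 0 < √5 * gap z w := by positivity
  simp only [capped, Near]
  rw [div_lt_iff₀ (lt_max_of_lt_left hD)]
  rcases le_total (|polar f z w - √5 * gap z w| / 11) (√5 * gap z w) with h | h
  · rw [max_eq_left h]
  · rw [max_eq_right h]
    constructor <;> intro h1 <;> nlinarith

theorem continuousOn_capped {f : ℤ × ℤ × ℤ} (hf : disc f = 5) :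
    ContinuousOn (capped f) (Set.Icc 0 1 ×ˢ Set.Icc 0 1) := by
  have h1 : Continuous fun p : ℝ × ℝ => polar f p.1 p.2 := by
    unfold polar
    fun_prop
  have h2 : Continuous fun p : ℝ × ℝ => gap p.1 p.2 := by
    unfold gap
    fun_prop
  refine ContinuousOn.div (by fun_prop) (by fun_prop) ?_
  rintro ⟨z, w⟩ ⟨hz, hw⟩
  refine ne_of_gt ?_
  dsimp only at hz hw ⊢
  rcases (gap_nonneg hz hw).eq_or_lt with h | h
  · have h3 := abs_pos.2 (polar_ne_zero hf hz hw h.symm)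
    rw [← h, mul_zero, sub_zero]
    exact lt_max_of_lt_right (by positivity)
  · exact lt_max_of_lt_left (by positivity)

theorem finite_goldenForms_bounded : {f | f ∈ goldenForms ∧ Bounded f}.Finite :=
  finite_setOf_bounded.subset fun _ hf => hf.2

/-- The forms of the orbit which can be close to a geodesic at a given step of its coding. -/
noncomputable def smallForms : Finset (ℤ × ℤ × ℤ) := finite_goldenForms_bounded.toFinset

theorem mem_smallForms {f : ℤ × ℤ × ℤ} : f ∈ smallForms ↔ f ∈ goldenForms ∧ Bounded f :=
  finite_goldenForms_bounded.mem_toFinset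

theorem goldenForm_mem_smallForms : (1, -1, -1) ∈ smallForms := by
  refine mem_smallForms.2 ⟨⟨by simp [disc], ⟨1, ?_⟩⟩, by simp [Bounded]⟩
  simp [mob, root, goldenRat]

/-- The smallest truncated cross ratio with the forms of `smallForms`. -/
noncomputable def smallest (p : ℝ × ℝ) : ℝ :=
  smallForms.inf' ⟨_, goldenForm_mem_smallForms⟩ fun f => capped f p

theorem smallest_lt_iff {p : ℝ × ℝ} {r : ℝ} :
    smallest p < r ↔ ∃ f, (f ∈ goldenForms ∧ Bounded f) ∧ capped f p < r :=
  (Finset.inf'_lt_iff _).trans (by simp only [mem_smallForms])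

theorem smallest_nonneg (p : ℝ × ℝ) : 0 ≤ smallest p := by
  by_contra! h
  obtain ⟨f, -, hf⟩ := smallest_lt_iff.1 h
  exact absurd (capped_nonneg f p) (not_le.2 hf)

theorem continuousOn_smallest : ContinuousOn smallest (Set.Icc 0 1 ×ˢ Set.Icc 0 1) :=
  ContinuousOn.finset_inf'_apply _ fun _ hf => continuousOn_capped (mem_smallForms.1 hf).1.1

/-- The functional of a binary sequence whose liminf is the approximation constant. -/
noncomputable def functional (x : ℕ → Bool) (n : ℕ) : ℝ := smallest (future x n, past x n)

theorem exists_window_abs_functional_sub_lt {ε : ℝ} (hε : 0 < ε) :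
    ∃ N, ∀ x n x' m, N ≤ n → N ≤ m → (∀ i < N, window x n i = window x' m i) →
      |functional x n - functional x' m| < ε := by
  have huc := (isCompact_Icc.prod isCompact_Icc).uniformContinuousOn_of_continuous
    continuousOn_smallest
  obtain ⟨δ, hδ, h⟩ := Metric.uniformContinuousOn_iff.1 huc ε hε
  obtain ⟨N, hN⟩ := exists_nat_one_div_lt hδ
  refine ⟨N, fun x n x' m hn hm hw => ?_⟩
  have h1 := (isChain_future x).abs_sub_le (isChain_future x') N n m
    fun i hi => congrArg Prod.fst (hw i hi)
  have h2 := abs_past_sub_le N n m hn hm fun i hi => congrArg Prod.snd (hw i hi)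
  refine h _ ⟨future_mem x n, past_mem x n⟩ _ ⟨future_mem x' m, past_mem x' m⟩ ?_
  rw [Prod.dist_eq, Real.dist_eq, Real.dist_eq]
  exact max_lt (h1.trans_lt hN) (h2.trans_lt hN)

theorem functional_lt_iff {x : ℕ → Bool} (hx : Admissible x) {r : ℝ} (hr : r ≤ 11) (n : ℕ) :
    functional x n < r ↔
      ∃ f, f ∈ goldenForms ∧ Near r f (future x 0) 1 ∧ Bounded (along x f n) := by
  have hg := gap_pos (future_mem_Ioo hx n) (past_mem x n)
  rw [functional, smallest_lt_iff]
  constructor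
  · rintro ⟨g, ⟨hg1, hg2⟩, h⟩
    obtain ⟨f, rfl⟩ := exists_along_eq x n g
    rw [capped_lt_iff hg hr, near_along] at h
    exact ⟨f, (along_mem_goldenForms x f n).1 hg1, h, hg2⟩
  · rintro ⟨f, hf, h, hb⟩
    refine ⟨along x f n, ⟨(along_mem_goldenForms x f n).2 hf, hb⟩, ?_⟩
    rwa [capped_lt_iff hg hr, near_along]

theorem finite_functional_lt_iff {x : ℕ → Bool} (hx : Admissible x) {r : ℝ} (hr : r ≤ 11) :
    {n | functional x n < r}.Finite ↔
      {f | f ∈ goldenForms ∧ Near r f (future x 0) 1}.Finite := by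
  constructor
  · intro h
    refine (h.biUnion (t := fun n => {f | Bounded (along x f n)}) fun n _ =>
      finite_setOf_bounded.preimage (along_injective x n).injOn).subset ?_
    rintro f ⟨hf, hn⟩
    obtain ⟨n, hb⟩ := exists_along_bounded hx hf.1 (hn.mono hr (future_mem x 0) (by simp))
    exact Set.mem_biUnion ((functional_lt_iff hx hr n).2 ⟨f, hf, hn, hb⟩) hb
  · intro h
    refine (h.biUnion (t := fun f => {n | Bounded (along x f n)}) fun f hf =>
      finite_setOf_along_bounded hx hf.1.1).subset ?_
    intro n hn
    obtain ⟨f, hf, hnear, hb⟩ := (functional_lt_iff hx hr n).1 hn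
    exact Set.mem_biUnion (x := f) ⟨hf, hnear⟩ hb

theorem near_one_iff {y : ℝ} (hy : 0 < y) (r : ℝ) (f : ℤ × ℤ × ℤ) :
    Near r f (y / (1 + y)) 1 ↔ |2 * f.1 * y + f.2.1 - √5| < r * √5 := by
  have h : 0 < 1 + y := by linarith
  have e1 : polar f (y / (1 + y)) 1 - √5 * gap (y / (1 + y)) 1
      = (2 * f.1 * y + f.2.1 - √5) / (1 + y) := by
    simp only [polar, gap]
    field_simp
    ring
  have e2 : r * (√5 * gap (y / (1 + y)) 1) = r * √5 / (1 + y) := by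
    simp only [gap]
    field_simp
    ring
  rw [Near, e1, e2, abs_div, abs_of_pos h, div_lt_div_iff_of_pos_right h]

theorem finite_functional_lt_iff_closeForms {x : ℕ → Bool} (hx : Admissible x) {y r : ℝ}
    (hy : 0 < y) (hxy : future x 0 = y / (1 + y)) (hr : r ≤ 11) :
    {n | functional x n < r}.Finite ↔ (closeForms y r).Finite := by
  rw [finite_functional_lt_iff hx hr, hxy]
  simp only [near_one_iff hy, closeForms]

theorem near_ten {z w : ℝ} (hz : z ∈ Set.Icc (0 : ℝ) 1) (hw : w ∈ Set.Icc (0 : ℝ) 1)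
    (hg : 1 / 2 ≤ gap z w) : Near 10 (1, -1, -1) z w := by
  have h5 : 2 ≤ √5 := Real.le_sqrt_of_sq_le (by norm_num)
  have h : |polar (1, -1, -1) z w| ≤ 2 := by
    obtain ⟨hz0, hz1⟩ := hz
    obtain ⟨hw0, hw1⟩ := hw
    have := mul_nonneg hz0 hw0
    have := mul_nonneg hz0 (sub_nonneg.2 hw1)
    have := mul_nonneg (sub_nonneg.2 hz1) hw0
    have := mul_nonneg (sub_nonneg.2 hz1) (sub_nonneg.2 hw1)
    simp only [polar]
    push_cast
    rw [abs_le]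
    constructor <;> linarith
  have h1 : 1 ≤ √5 * gap z w := by nlinarith
  rw [abs_le] at h
  rw [Near, abs_lt]
  constructor <;> linarith [h.1, h.2]

theorem half_le_gap {z w : ℝ} (hz : 1 / 2 ≤ z) (hw : w ≤ 1 / 2) : 1 / 2 ≤ gap z w := by
  unfold gap
  nlinarith [mul_nonneg (sub_nonneg.2 hz) (sub_nonneg.2 hw)]

theorem infinite_functional_lt_ten {x : ℕ → Bool} (hx : Admissible x) :
    {n | functional x n < 10}.Infinite := by
  refine Nat.frequently_atTop_iff_infinite.1 (frequently_atTop.2 fun n => ?_)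
  obtain ⟨m, hm, hne⟩ := hx.2 n
  refine ⟨m + 1, by omega, smallest_lt_iff.2
    ⟨_, mem_smallForms.1 goldenForm_mem_smallForms, ?_⟩⟩
  rw [capped_lt_iff (gap_pos (future_mem_Ioo hx _) (past_mem x _)) (by norm_num)]
  refine near_ten (future_mem x _) (past_mem x _) ?_
  rw [past, future_eq]
  have hp := past_mem x m
  have hf := future_mem x (m + 1 + 1)
  cases h : x m <;> cases h' : x (m + 1)
  · exact absurd (h.trans h'.symm) hne
  · exact half_le_gap (half_le_branch_true hf) (branch_false_le_half hp)
  · rw [gap, add_comm, mul_right_comm]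
    exact half_le_gap (half_le_branch_true hp) (branch_false_le_half hf)
  · exact absurd (h.trans h'.symm) hne

theorem exists_isLiminf_functional {x : ℕ → Bool} (hx : Admissible x) :
    ∃ L, 0 ≤ L ∧ L ≤ 10 ∧ IsLiminf (functional x) L := by
  refine exists_isThreshold (fun r s hrs h => h.subset fun n hn => lt_of_lt_of_le hn hrs) ?_
    (infinite_functional_lt_ten hx)
  convert Set.finite_empty
  ext n
  simpa [functional] using smallest_nonneg (future x n, past x n)

theorem IsThreshold.unique {P : ℝ → Prop} {L M : ℝ} (hL : IsThreshold P L)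
    (hM : IsThreshold P M) : L = M := by
  refine le_antisymm ?_ ?_ <;> by_contra! h
  · exact hM.2 _ (by linarith : M < (L + M) / 2) (hL.1 _ (by linarith))
  · exact hL.2 _ (by linarith : L < (L + M) / 2) (hM.1 _ (by linarith))

theorem branch_mem_orbit {z : ℝ} (b : Bool) (hz : z ∈ mobOrbit goldenRat) :
    branch b z ∈ mobOrbit goldenRat := by
  cases b
  · simpa [branch] using div_one_add_mem_orbit hz
  · have := mob_mem_orbit ⟨!![0, 1; -1, 2], by simp⟩ hz
    simpa [mob, branch, sub_eq_add_neg, add_comm] using this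

theorem IsChain.mem_orbit {x : ℕ → Bool} {z : ℕ → ℝ} (hz : IsChain x z) {n : ℕ}
    (h : z n ∈ mobOrbit goldenRat) : z 0 ∈ mobOrbit goldenRat := by
  induction n with
  | zero => exact h
  | succ n ih =>
    refine ih ?_
    rw [(hz n).2]
    exact branch_mem_orbit _ h

theorem goldenRat_mem_orbit : goldenRat ∈ mobOrbit goldenRat := ⟨1, by simp [mob]⟩

theorem goldenRat_sq : goldenRat ^ 2 = goldenRat + 1 := Real.goldenRatio_sq

theorem IsChain.mem_orbit_of_alternating {x : ℕ → Bool} {z : ℕ → ℝ} (hz : IsChain x z) {n : ℕ}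
    (h : ∀ m, n ≤ m → x m ≠ x (m + 1)) : z 0 ∈ mobOrbit goldenRat := by
  have h1 : 1 < goldenRat := Real.one_lt_goldenRatio
  have h2 : goldenRat < 2 := Real.goldenRatio_lt_two
  have hsq := goldenRat_sq
  have hchain : IsChain (fun i => x (n + i))
      fun i => if x (n + i) then goldenRat - 1 else 2 - goldenRat := by
    intro i
    have hne := h (n + i) (by omega)
    dsimp only
    rw [← add_assoc]
    cases hi : x (n + i) <;> cases hi' : x (n + i + 1) <;> simp [hi, hi', branch] at hne ⊢
    · refine ⟨⟨h2.le, by linarith⟩, ?_⟩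
      rw [eq_div_iff (by linarith)]
      linear_combination -hsq
    · refine ⟨⟨h1.le, by linarith⟩, ?_⟩
      rw [eq_comm, inv_eq_of_mul_eq_one_right]
      linear_combination hsq
  have he : z n = _ := hz.eq hchain (n := n) (m := 0) fun i => by simp
  refine hz.mem_orbit (n := n) ?_
  rw [he]
  have h3 := sub_one_mem_orbit goldenRat_mem_orbit
  split_ifs
  · exact h3
  · have h4 := div_one_add_mem_orbit h3
    convert h4 using 1
    rw [eq_div_iff (by linarith)]
    linear_combination -hsq

theorem IsChain.not_eventually_constant {x : ℕ → Bool} {z : ℕ → ℝ} (hz : IsChain x z)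
    (hirr : ∀ n, Irrational (z n)) (n : ℕ) : ∃ m, n ≤ m ∧ x m ≠ x (m + 1) := by
  by_contra! h
  have hall : ∀ i, x (n + i) = x n := by
    intro i
    induction i with
    | zero => rfl
    | succ i ih => exact (h (n + i) (by omega)).symm.trans ih
  have hchain : IsChain (fun _ => x n) fun _ => if x n then 1 else 0 := by
    intro i
    cases hn : x n <;> norm_num [branch]
  have he : z n = _ := hz.eq hchain (n := n) (m := 0) hall
  refine hirr n ?_
  rw [he]
  split_ifs
  · exact ⟨1, by simp⟩
  · exact ⟨0, by simp⟩

theorem IsChain.admissible {x : ℕ → Bool} {z : ℕ → ℝ} (hz : IsChain x z)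
    (hirr : ∀ n, Irrational (z n)) (h0 : z 0 ∉ mobOrbit goldenRat) : Admissible x := by
  refine ⟨fun n => ?_, hz.not_eventually_constant hirr⟩
  by_contra! h
  exact h0 (hz.mem_orbit_of_alternating h)

/-- The Farey map. -/
noncomputable def farey (z : ℝ) : ℝ := if 1 / 2 < z then 2 - 1 / z else z / (1 - z)

theorem branch_farey {z : ℝ} (hz : z ∈ Set.Ioo (0 : ℝ) 1) :
    branch (decide (1 / 2 < z)) (farey z) = z := by
  obtain ⟨h0, h1⟩ := hz
  have h0' := h0.ne'
  have h1' : 1 - z ≠ 0 := by linarith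
  by_cases h : 1 / 2 < z
  · simp only [branch, farey, if_pos h, decide_eq_true h, if_true]
    field_simp
    ring
  · simp only [branch, farey, if_neg h, decide_eq_false h, Bool.false_eq_true, if_false]
    field_simp
    ring

theorem irrational_of_branch {b : Bool} {z : ℝ} (h : Irrational (branch b z)) :
    Irrational z := by
  rintro ⟨q, rfl⟩
  refine h ⟨if b then 1 / (2 - q) else q / (1 + q), ?_⟩
  cases b <;> simp [branch]

theorem farey_mem {z : ℝ} (hz : z ∈ Set.Ioo (0 : ℝ) 1) (hirr : Irrational z) :
    farey z ∈ Set.Ioo (0 : ℝ) 1 ∧ Irrational (farey z) := by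
  refine ⟨?_, irrational_of_branch (b := decide (1 / 2 < z)) (by rwa [branch_farey hz])⟩
  obtain ⟨h0, h1⟩ := hz
  by_cases h : 1 / 2 < z
  · simp only [farey, if_pos h]
    have h2 : 1 / z < 2 := (div_lt_iff₀ h0).2 (by linarith)
    have h3 : 1 < 1 / z := (lt_div_iff₀ h0).2 (by linarith)
    exact ⟨by linarith, by linarith⟩
  · have hne : z ≠ 1 / 2 := fun e => hirr ⟨1 / 2, by rw [e]; norm_num⟩
    have h2 : z < 1 / 2 := lt_of_le_of_ne (not_lt.1 h) hne
    simp only [farey, if_neg h]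
    exact ⟨div_pos h0 (by linarith), (div_lt_one (by linarith)).2 (by linarith)⟩

theorem exists_admissible_future_eq {z : ℝ} (hz : z ∈ Set.Ioo (0 : ℝ) 1) (hirr : Irrational z)
    (hzo : z ∉ mobOrbit goldenRat) : ∃ x, Admissible x ∧ future x 0 = z := by
  have hmem : ∀ n, farey^[n] z ∈ Set.Ioo (0 : ℝ) 1 ∧ Irrational (farey^[n] z) := by
    intro n
    induction n with
    | zero => exact ⟨hz, hirr⟩
    | succ n ih =>
      rw [Function.iterate_succ_apply']
      exact farey_mem ih.1 ih.2
  have hchain : IsChain (fun n => decide (1 / 2 < farey^[n] z)) fun n => farey^[n] z := by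
    intro n
    refine ⟨Set.Ioo_subset_Icc_self (hmem n).1, ?_⟩
    dsimp only
    rw [Function.iterate_succ_apply', branch_farey (hmem n).1]
  exact ⟨_, hchain.admissible (fun n => (hmem n).2) hzo,
    (isChain_future _).eq hchain (n := 0) (m := 0) fun i => rfl⟩

theorem div_one_sub_cancel {z : ℝ} (hz : 1 - z ≠ 0) :
    z / (1 - z) / (1 + z / (1 - z)) = z := by
  field_simp
  ring

theorem future_notMem_orbit {x : ℕ → Bool} (hx : Admissible x) :
    future x 0 ∉ mobOrbit goldenRat := by
  intro h
  obtain ⟨f, hf, hroot⟩ := exists_root_eq (div_one_sub_mem_orbit h)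
  let q : ℤ × ℤ × ℤ → ℝ → ℝ := fun f z => f.1 * z ^ 2 + f.2.1 * (z * (1 - z)) + f.2.2 * (1 - z) ^ 2
  have hq : ∀ n, q (along x f n) (future x n) = 0 := by
    intro n
    induction n with
    | zero =>
      have h1 : 1 - future x 0 ≠ 0 := by linarith [(future_mem_Ioo hx 0).2]
      have h2 := root_sq hf.1
      rw [hroot] at h2
      field_simp at h2
      simp only [along, q]
      linear_combination h2
    | succ n ih =>
      obtain ⟨h0, h1⟩ := future_mem x (n + 1)
      rw [future_eq] at ih
      rw [along]
      generalize future x (n + 1) = z at *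
      generalize along x f n = g at *
      cases hb : x n
      · have h2 : 1 + z ≠ 0 := by linarith
        simp only [hb, q, branch, act, Bool.false_eq_true, if_false] at ih ⊢
        field_simp at ih
        push_cast
        linear_combination ih
      · have h2 : 2 - z ≠ 0 := by linarith
        simp only [hb, q, branch, act, if_true] at ih ⊢
        field_simp at ih
        push_cast
        linear_combination ih
  obtain ⟨n, hn⟩ := exists_sameSign hx hf.1
  have h1 := hq n
  obtain ⟨hz0, hz1⟩ := future_mem_Ioo hx n
  have hz2 : 0 < 1 - future x n := by linarith
  simp only [q] at h1
  generalize along x f n = g at *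
  rcases hn with ⟨hA, hB, hC⟩ | ⟨hA, hB, hC⟩
  · have hA : (0 : ℝ) < g.1 := by exact_mod_cast hA
    have hB : (0 : ℝ) < g.2.1 := by exact_mod_cast hB
    have hC : (0 : ℝ) < g.2.2 := by exact_mod_cast hC
    refine ne_of_gt ?_ h1
    positivity
  · have hA : (0 : ℝ) < -g.1 := by exact_mod_cast neg_pos.2 hA
    have hB : (0 : ℝ) < -g.2.1 := by exact_mod_cast neg_pos.2 hB
    have hC : (0 : ℝ) < -g.2.2 := by exact_mod_cast neg_pos.2 hC
    have : 0 < -(g.1 : ℝ) * future x n ^ 2 + -(g.2.1 : ℝ) * (future x n * (1 - future x n))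
        + -(g.2.2 : ℝ) * (1 - future x n) ^ 2 := by positivity
    linarith

theorem exists_point_of_admissible {x : ℕ → Bool} (hx : Admissible x) :
    ∃ y, Irrational y ∧ y ∉ mobOrbit goldenRat ∧
      ∀ r ≤ 11, {n | functional x n < r}.Finite ↔ (closeForms y r).Finite := by
  obtain ⟨h0, h1⟩ := future_mem_Ioo hx 0
  have h2 : 0 < 1 - future x 0 := by linarith
  have e := div_one_sub_cancel h2.ne'
  refine ⟨future x 0 / (1 - future x 0), ?_, fun h => ?_, fun r hr => ?_⟩
  · refine irrational_of_branch (b := false) ?_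
    simp only [branch, Bool.false_eq_true, if_false]
    rw [e]
    exact irrational_future hx 0
  · have h3 := div_one_add_mem_orbit h
    rw [e] at h3
    exact future_notMem_orbit hx h3
  · exact finite_functional_lt_iff_closeForms hx (div_pos h0 h2) e.symm hr

theorem exists_admissible_of_point {y : ℝ} (hy : Irrational y) (hyo : y ∉ mobOrbit goldenRat) :
    ∃ x, Admissible x ∧
      ∀ r ≤ 11, {n | functional x n < r}.Finite ↔ (closeForms y r).Finite := by
  obtain ⟨N, hN⟩ := exists_nat_gt (-y)
  induction N generalizing y with
  | zero =>
    have hpos : 0 < y := by simpa using hN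
    have h1 : 1 + y ≠ 0 := by linarith
    have e : y / (1 + y) / (1 - y / (1 + y)) = y := by
      field_simp
      ring
    have hirr : Irrational (y / (1 + y)) := by
      rintro ⟨q, hq⟩
      refine hy ⟨q / (1 - q), ?_⟩
      push_cast
      rw [hq, e]
    have ho : y / (1 + y) ∉ mobOrbit goldenRat := by
      intro h
      have h3 := div_one_sub_mem_orbit h
      rw [e] at h3
      exact hyo h3
    obtain ⟨x, hx, hxy⟩ := exists_admissible_future_eq (z := y / (1 + y))
      ⟨by positivity, (div_lt_one (by linarith)).2 (by linarith)⟩ hirr ho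
    exact ⟨x, hx, fun r hr => finite_functional_lt_iff_closeForms hx hpos hxy hr⟩
  | succ N ih =>
    push_cast at hN
    have h1 : Irrational (y + 1) := by exact_mod_cast hy.add_natCast 1
    obtain ⟨x, hx, h⟩ := ih h1 (fun h => hyo (by simpa using sub_one_mem_orbit h)) (by linarith)
    refine ⟨x, hx, fun r hr => (h r hr).trans ?_⟩
    rw [← finite_closeForms_sub_one, add_sub_cancel_right]

theorem approxConst_eq_of_isLiminf {x : ℕ → Bool} (hx : Admissible x) {y L : ℝ}
    (hxy : ∀ r ≤ 11, {n | functional x n < r}.Finite ↔ (closeForms y r).Finite)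
    (hL : IsLiminf (functional x) L) : approxConst (mobOrbit goldenRat) y = L := by
  obtain ⟨M, -, hM10, hM⟩ := exists_isLiminf_functional hx
  obtain rfl := hM.unique hL
  refine approxConst_eq_of_isThreshold ⟨fun r hr => (hxy r (by linarith)).1 (hL.1 r hr),
    fun r hr h => ?_⟩
  have hs : M < min r 11 := lt_min hr (by linarith)
  refine hL.2 _ hs ((hxy _ (min_le_right _ _)).2 (h.subset fun f hf => ⟨hf.1, hf.2.trans_le ?_⟩))
  exact mul_le_mul_of_nonneg_right (min_le_left _ _) (Real.sqrt_nonneg 5)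

theorem lagrangeSpectrum_eq : lagrangeSpectrum (mobOrbit goldenRat)
    = {L | ∃ x, Admissible x ∧ IsLiminf (functional x) L} := by
  ext L
  constructor
  · rintro ⟨y, ⟨hy, hyo⟩, rfl⟩
    obtain ⟨x, hx, hxy⟩ := exists_admissible_of_point hy hyo
    obtain ⟨M, -, -, hM⟩ := exists_isLiminf_functional hx
    exact ⟨x, hx, (approxConst_eq_of_isLiminf hx hxy hM).symm ▸ hM⟩
  · rintro ⟨x, hx, hL⟩
    obtain ⟨y, hy, hyo, hxy⟩ := exists_point_of_admissible hx
    exact ⟨y, ⟨hy, hyo⟩, approxConst_eq_of_isLiminf hx hxy hL⟩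

end GoldenSpectrum

/-- Parkkonen-Paulin: for the approximation of real numbers by the elements of the orbit
`PSL₂(ℤ)·φ` of the Golden Ratio `φ` with height function `H(α) = 2/|α − α^σ|`, the
Lagrange spectrum `{c(y) : y ∈ ℝ ∖ (ℚ ∪ PSL₂(ℤ)·φ)}` is closed and bounded. -/
theorem lagrangeSpectrum_goldenRatio_isClosed_isBounded :
    IsClosed (lagrangeSpectrum (mobOrbit goldenRat)) ∧
    Bornology.IsBounded (lagrangeSpectrum (mobOrbit goldenRat)) := by
  rw [GoldenSpectrum.lagrangeSpectrum_eq]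
  refine ⟨GoldenSpectrum.isClosed_setOf_isLiminf _ fun ε hε =>
    GoldenSpectrum.exists_window_abs_functional_sub_lt hε, ?_⟩
  refine (Metric.isBounded_Icc (0 : ℝ) 10).subset ?_
  rintro L ⟨x, hx, hL⟩
  obtain ⟨M, h0, h10, hM⟩ := GoldenSpectrum.exists_isLiminf_functional hx
  rw [hL.unique hM]
  exact ⟨h0, h10⟩
end

section
/- Consider the approximation of real numbers by the elements of the orbit PSL₂(ℤ)·φ of the Golden Ratio φ, with height function H. Then the Hurwitz constant, namely the supremum of the approximation constants c(y) over all y ∈ ℝ ∖ (ℚ ∪ PSL₂(ℤ)·φ), is equal to 3/√5 − 1. -/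
open scoped Classical

lemma goldenRat_sq : goldenRat ^ 2 = goldenRat + 1 := by
  have h : Real.sqrt 5 ^ 2 = 5 := Real.sq_sqrt (by norm_num)
  unfold goldenRat
  nlinarith

lemma sqrt_five_eq : Real.sqrt 5 = 2 * goldenRat - 1 := by
  unfold goldenRat
  ring

lemma goldenRat_gt : 1.618 < goldenRat := by
  have : (2.236 : ℝ) < Real.sqrt 5 := Real.lt_sqrt_of_sq_lt (by norm_num)
  unfold goldenRat
  linarith

lemma goldenRat_lt : goldenRat < 1.6181 := by
  have : Real.sqrt 5 < 2.2362 := by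
    rw [Real.sqrt_lt' (by norm_num)]
    norm_num
  unfold goldenRat
  linarith

lemma irrational_sqrt_five : Irrational (Real.sqrt 5) := by
  simpa using Nat.Prime.irrational_sqrt (show Nat.Prime 5 by norm_num)

lemma irrational_of_sq_eq_five {x : ℝ} (h : x ^ 2 = 5) : Irrational x := by
  have h5 : Real.sqrt 5 = |x| := by rw [← h, Real.sqrt_sq_eq_abs]
  have := irrational_sqrt_five
  rw [h5] at this
  rintro ⟨r, rfl⟩
  exact this ⟨|r|, by push_cast; rfl⟩

lemma galConj_eq {α σ : ℝ} (h : IsGalConj α σ) : galConj α = σ := by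
  have hex : ∃ σ, IsGalConj α σ := ⟨σ, h⟩
  have h' : IsGalConj α (galConj α) := by
    unfold galConj
    rw [dif_pos hex]
    exact hex.choose_spec
  generalize galConj α = τ at h'
  obtain ⟨hα, hσ, a, b, c, ha, h1, h2⟩ := h
  obtain ⟨-, hτ, a', b', c', ha', h3, h4⟩ := h'
  have ha0 : (a : ℝ) ≠ 0 := by exact_mod_cast ha
  have ha0' : (a' : ℝ) ≠ 0 := by exact_mod_cast ha'
  have e1 : (a : ℝ) * (σ + α) + b = 0 := by
    apply mul_left_cancel₀ (sub_ne_zero.2 hσ)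
    linear_combination h2 - h1
  have e2 : (a' : ℝ) * (τ + α) + b' = 0 := by
    apply mul_left_cancel₀ (sub_ne_zero.2 hτ)
    linear_combination h4 - h3
  have e3 : ((a' * b - a * b' : ℚ) : ℝ) * α + ((a' * c - a * c' : ℚ) : ℝ) = 0 := by
    push_cast
    linear_combination (a' : ℝ) * h1 - (a : ℝ) * h3
  have e4 : a' * b - a * b' = 0 := by
    by_contra hne
    have hne' : ((a' * b - a * b' : ℚ) : ℝ) ≠ 0 := by exact_mod_cast hne
    apply hα
    refine ⟨-(a' * c - a * c') / (a' * b - a * b'), ?_⟩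
    rw [Rat.cast_div, div_eq_iff hne', Rat.cast_neg]
    linear_combination -e3
  have e5 : (a' : ℝ) * b - a * b' = 0 := by exact_mod_cast e4
  apply mul_left_cancel₀ (mul_ne_zero ha0 ha0')
  linear_combination (a : ℝ) * e2 - (a' : ℝ) * e1 + e5

lemma int_sq_ne_five (b : ℤ) : b ^ 2 ≠ 5 := by
  intro h
  have h1 : b ≤ 2 := by nlinarith
  have h2 : -2 ≤ b := by nlinarith
  interval_cases b <;> omega

section DiscFive

variable {α : ℝ} {a b c : ℤ}

lemma leadingCoeff_ne_zero_of_disc_five (hd : b ^ 2 - 4 * a * c = 5) : a ≠ 0 := by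
  rintro rfl
  exact int_sq_ne_five b (by linarith)

lemma deriv_sq_of_disc_five (hd : b ^ 2 - 4 * a * c = 5)
    (h : (a : ℝ) * α ^ 2 + b * α + c = 0) : (2 * a * α + b) ^ 2 = 5 := by
  have hd' : (b : ℝ) ^ 2 - 4 * a * c = 5 := by exact_mod_cast hd
  linear_combination 4 * (a : ℝ) * h + hd'

lemma irrational_of_disc_five (hd : b ^ 2 - 4 * a * c = 5)
    (h : (a : ℝ) * α ^ 2 + b * α + c = 0) : Irrational α := by
  have := irrational_of_sq_eq_five (deriv_sq_of_disc_five hd h)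
  rintro ⟨r, rfl⟩
  exact this ⟨2 * a * r + b, by push_cast; rfl⟩

lemma abs_deriv_of_disc_five (hd : b ^ 2 - 4 * a * c = 5)
    (h : (a : ℝ) * α ^ 2 + b * α + c = 0) : |2 * a * α + b| = Real.sqrt 5 := by
  rw [← deriv_sq_of_disc_five hd h, Real.sqrt_sq_eq_abs]

lemma qiHeight_of_disc_five (hd : b ^ 2 - 4 * a * c = 5)
    (h : (a : ℝ) * α ^ 2 + b * α + c = 0) : qiHeight α = 2 * |(a : ℝ)| / Real.sqrt 5 := by
  have ha : (a : ℝ) ≠ 0 := by exact_mod_cast leadingCoeff_ne_zero_of_disc_five hd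
  have hconj : IsGalConj α (-b / a - α) := by
    refine ⟨irrational_of_disc_five hd h, ?_, a, b, c, ?_, ?_, ?_⟩
    · intro he
      have h0 : 2 * (a : ℝ) * α + b = 0 := by
        field_simp at he
        linarith
      have := deriv_sq_of_disc_five hd h
      rw [h0] at this
      norm_num at this
    · exact_mod_cast leadingCoeff_ne_zero_of_disc_five hd
    · exact_mod_cast h
    · push_cast
      field_simp
      linear_combination (a : ℝ) * h
  have hs : α - (-b / a - α) = (2 * a * α + b) / a := by
    field_simp
    ring
  rw [qiHeight, galConj_eq hconj, hs, abs_div, abs_deriv_of_disc_five hd h]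
  field_simp

end DiscFive

lemma goldenRat_irrational : Irrational goldenRat :=
  irrational_of_disc_five (a := 1) (b := -1) (c := -1) (by norm_num)
    (by push_cast; linear_combination goldenRat_sq)

section Homography

variable {p r s u : ℤ}

lemma denom_ne_zero (hdet : (p * u - r * s) ^ 2 = 1) {x : ℝ} (hx : Irrational x) :
    (s : ℝ) * x + u ≠ 0 := by
  intro h0
  by_cases hs : s = 0
  · subst hs
    have : u = 0 := by
      have : (u : ℝ) = 0 := by simpa using h0
      exact_mod_cast this
    subst this
    norm_num at hdet
  · have hs' : (s : ℝ) ≠ 0 := by exact_mod_cast hs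
    apply hx
    refine ⟨-u / s, ?_⟩
    push_cast
    rw [div_eq_iff hs']
    linear_combination -h0

lemma mem_mobOrbit_of_det_eq_one {p r s u : ℤ} (hdet : p * u - r * s = 1) :
    (p * goldenRat + r) / (s * goldenRat + u) ∈ mobOrbit goldenRat :=
  ⟨⟨!![p, r; s, u], by rw [Matrix.det_fin_two_of]; exact hdet⟩, by simp [mob]⟩

lemma mem_mobOrbit_of_det_sq (hdet : (p * u - r * s) ^ 2 = 1) :
    (p * goldenRat + r) / (s * goldenRat + u) ∈ mobOrbit goldenRat := by
  rcases sq_eq_one_iff.1 hdet with h | h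
  · exact mem_mobOrbit_of_det_eq_one h
  · have hpos : (0 : ℝ) < goldenRat - 1 := by linarith [goldenRat_gt]
    have hmem := mem_mobOrbit_of_det_eq_one (p := r) (r := p - r) (s := u) (u := s - u)
      (by linear_combination -h)
    convert hmem using 1
    rw [← mul_div_mul_right _ _ hpos.ne']
    congr 1
    · push_cast
      linear_combination (p : ℝ) * goldenRat_sq
    · push_cast
      linear_combination (s : ℝ) * goldenRat_sq

lemma disc_five_of_det_sq (hdet : (p * u - r * s) ^ 2 = 1) :
    (-(-2 * p * s + p * u + r * s + 2 * r * u)) ^ 2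
      - 4 * (u ^ 2 + s * u - s ^ 2) * (r ^ 2 + r * p - p ^ 2) = 5 := by
  linear_combination 5 * hdet

lemma root_of_det_sq (hdet : (p * u - r * s) ^ 2 = 1) :
    ((u ^ 2 + s * u - s ^ 2 : ℤ) : ℝ) * ((p * goldenRat + r) / (s * goldenRat + u)) ^ 2
      + ((-(-2 * p * s + p * u + r * s + 2 * r * u) : ℤ) : ℝ)
          * ((p * goldenRat + r) / (s * goldenRat + u))
      + ((r ^ 2 + r * p - p ^ 2 : ℤ) : ℝ) = 0 := by
  have h := denom_ne_zero hdet goldenRat_irrational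
  have hx := div_mul_cancel₀ ((p : ℝ) * goldenRat + r) h
  generalize ((p : ℝ) * goldenRat + r) / (s * goldenRat + u) = x at hx ⊢
  apply mul_right_cancel₀ (pow_ne_zero 2 h)
  push_cast
  linear_combination
    ((u : ℝ) ^ 2 + s * u - s ^ 2) * (x * (s * goldenRat + u) + (p * goldenRat + r)) * hx
      - (-2 * p * s + p * u + r * s + 2 * r * u : ℝ) * (s * goldenRat + u) * hx
      + ((p : ℝ) * u - r * s) ^ 2 * goldenRat_sq

lemma exists_disc_five_of_mem_mobOrbit {α : ℝ} (hα : α ∈ mobOrbit goldenRat) :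
    ∃ a b c : ℤ, b ^ 2 - 4 * a * c = 5 ∧ (a : ℝ) * α ^ 2 + b * α + c = 0 := by
  obtain ⟨A, rfl⟩ := hα
  have hdet : (A.1 0 0 * A.1 1 1 - A.1 0 1 * A.1 1 0) ^ 2 = 1 := by
    rw [← Matrix.det_fin_two, A.2]
    norm_num
  exact ⟨_, _, _, disc_five_of_det_sq hdet, root_of_det_sq hdet⟩

end Homography

/-- `y` is the image of `t > 1` by an integral homography of determinant `±1`, as happens for
the complete quotients `t` of the continued fraction expansion of `y`. -/
structure IsCompleteQuotient (y t : ℝ) (p p' q q' : ℤ) : Prop where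
  det : (p * q' - p' * q) ^ 2 = 1
  nonneg : 0 ≤ q'
  pos : 1 ≤ q
  le : q' ≤ q
  irr : Irrational t
  one_lt : 1 < t
  eq : y * (q * t + q') = p * t + p'

lemma one_lt_inv_fract {t : ℝ} (ht : Irrational t) : 1 < (Int.fract t)⁻¹ := by
  refine (one_lt_inv₀ ?_).2 (Int.fract_lt_one t)
  exact Int.fract_pos.2 (ht.ne_int _)

lemma irrational_inv_fract {t : ℝ} (ht : Irrational t) : Irrational (Int.fract t)⁻¹ := by
  rw [irrational_inv_iff]
  exact ht.sub_intCast _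

lemma exists_isCompleteQuotient_of_irrational {y : ℝ} (hy : Irrational y) :
    IsCompleteQuotient y (Int.fract y)⁻¹ ⌊y⌋ 1 1 0 where
  det := by norm_num
  nonneg := le_rfl
  pos := le_rfl
  le := by norm_num
  irr := irrational_inv_fract hy
  one_lt := one_lt_inv_fract hy
  eq := by
    have : Int.fract y ≠ 0 := (Int.fract_pos.2 (hy.ne_int _)).ne'
    field_simp
    push_cast
    linear_combination -(Int.floor_add_fract y)

namespace IsCompleteQuotient

variable {y t : ℝ} {p p' q q' : ℤ}

lemma next (h : IsCompleteQuotient y t p p' q q') :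
    IsCompleteQuotient y (Int.fract t)⁻¹ (⌊t⌋ * p + p') p (⌊t⌋ * q + q') q where
  det := by linear_combination h.det
  nonneg := by linarith [h.pos]
  pos := by
    have h1 : 1 ≤ ⌊t⌋ := Int.le_floor.2 (by exact_mod_cast h.one_lt.le)
    nlinarith [h.pos, h.nonneg]
  le := by
    have h1 : 1 ≤ ⌊t⌋ := Int.le_floor.2 (by exact_mod_cast h.one_lt.le)
    nlinarith [h.pos, h.nonneg]
  irr := irrational_inv_fract h.irr
  one_lt := one_lt_inv_fract h.irr
  eq := by
    have h0 : Int.fract t ≠ 0 := (Int.fract_pos.2 (h.irr.ne_int _)).ne'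
    have h1 := h.eq
    have h2 := Int.floor_add_fract t
    field_simp
    push_cast
    linear_combination h1 + (y * q - p) * h2

lemma add_lt_next (h : IsCompleteQuotient y t p p' q q') : q + q' < (⌊t⌋ * q + q') + q := by
  have h1 : 1 ≤ ⌊t⌋ := Int.le_floor.2 (by exact_mod_cast h.one_lt.le)
  nlinarith [h.pos]

lemma exists_le_add (hy : Irrational y) (n : ℕ) :
    ∃ t p p' q q', IsCompleteQuotient y t p p' q q' ∧ (n : ℤ) ≤ q + q' := by
  induction n with
  | zero => exact ⟨_, _, _, _, _, exists_isCompleteQuotient_of_irrational hy, by norm_num⟩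
  | succ n ih =>
    obtain ⟨t, p, p', q, q', h, hn⟩ := ih
    refine ⟨_, _, _, _, _, h.next, ?_⟩
    have := h.add_lt_next
    push_cast
    omega

lemma next_of_lt {n : ℕ} (h : IsCompleteQuotient y t p p' q q') (hn : (n : ℤ) ≤ q + q')
    (ht : t < goldenRat + 1) : ∃ t p p' q q', IsCompleteQuotient y t p p' q q' ∧
      (n : ℤ) ≤ q + q' ∧ q ≤ 4 * q' := by
  refine ⟨_, _, _, _, _, h.next, ?_, ?_⟩
  · linarith [h.add_lt_next]
  · have h2 : ⌊t⌋ < 3 := Int.floor_lt.2 (by push_cast; linarith [goldenRat_lt])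
    nlinarith [h.pos, h.le]

/-- Complete quotients good for approximation appear arbitrarily far in the expansion. -/
lemma exists_good (hy : Irrational y) (n : ℕ) :
    ∃ t p p' q q', IsCompleteQuotient y t p p' q q' ∧ (n : ℤ) ≤ q + q' ∧
      (goldenRat + 1 ≤ t ∨ goldenRat ≤ t ∧ q ≤ 4 * q') := by
  obtain ⟨t, p, p', q, q', h, hn⟩ := exists_le_add hy n
  rcases le_or_gt (goldenRat + 1) t with ht | ht
  · exact ⟨_, _, _, _, _, h, hn, .inl ht⟩
  obtain ⟨t, p, p', q, q', h, hn, hq⟩ := h.next_of_lt hn ht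
  rcases le_or_gt goldenRat t with ht | ht
  · exact ⟨_, _, _, _, _, h, hn, .inr ⟨ht, hq⟩⟩
  have hfl : ⌊t⌋ = 1 := by
    rw [Int.floor_eq_iff]
    push_cast
    constructor <;> linarith [h.one_lt, goldenRat_lt]
  refine ⟨_, _, _, _, _, h.next, ?_, .inr ⟨?_, ?_⟩⟩
  · linarith [h.add_lt_next]
  · have h0 : 0 < Int.fract t := Int.fract_pos.2 (h.irr.ne_int _)
    have h1 : Int.fract t = t - 1 := by rw [Int.fract, hfl]; norm_num
    rw [le_inv_comm₀ (by linarith [goldenRat_gt]) h0]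
    have h2 : goldenRat⁻¹ = goldenRat - 1 :=
      inv_eq_of_mul_eq_one_right (by linear_combination goldenRat_sq)
    rw [h1, h2]
    linarith
  · rw [hfl]
    linarith [h.le, h.pos]

lemma exists_approx_of_le (h : IsCompleteQuotient y t p p' q q') {e : ℤ} (he : e ^ 2 = 1) (k : ℤ)
    (h1 : |t - (e * goldenRat + k)| * |q * (e * (1 - goldenRat) + k) + q'|
      ≤ (2 - goldenRat) * (q * t + q'))
    (h2 : |t - (e * goldenRat + k)| ≤ 4 * t)
    (h3 : q ≤ |q * (e * goldenRat + k) + q'|) :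
    ∃ α ∈ mobOrbit goldenRat, qiHeight α * |y - α| ≤ 3 / Real.sqrt 5 - 1 ∧
      |y - α| ≤ 4 / q := by
  have hdet : ((p * e) * (q * k + q') - (p * k + p') * (q * e)) ^ 2 = 1 := by
    linear_combination e ^ 2 * h.det + he
  have hmem := mem_mobOrbit_of_det_sq hdet
  have hH := qiHeight_of_disc_five (disc_five_of_det_sq hdet) (root_of_det_sq hdet)
  have hden := denom_ne_zero hdet goldenRat_irrational
  set α := (((p * e : ℤ) : ℝ) * goldenRat + ((p * k + p' : ℤ) : ℝ)) /
    (((q * e : ℤ) : ℝ) * goldenRat + ((q * k + q' : ℤ) : ℝ)) with hα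
  push_cast at hα hH hden
  have hq : (1 : ℝ) ≤ q := by exact_mod_cast h.pos
  have hq' : (0 : ℝ) ≤ q' := by exact_mod_cast h.nonneg
  have ht := h.one_lt
  have hD : 0 < q * t + q' := by nlinarith
  have hDle : t ≤ q * t + q' := by nlinarith
  have hdet' : |(p : ℝ) * q' - p' * q| = 1 := by
    have : ((p : ℝ) * q' - p' * q) ^ 2 = 1 := by exact_mod_cast h.det
    rwa [sq_eq_one_iff, ← abs_eq zero_le_one] at this
  set B : ℝ := e * goldenRat + k with hB
  set B' : ℝ := e * (1 - goldenRat) + k with hB'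
  have hE : (q : ℝ) * e * goldenRat + (q * k + q') = q * B + q' := by rw [hB]; ring
  rw [hE] at hα hden
  have hdist : y - α = (p * q' - p' * q) * (t - B) / ((q * t + q') * (q * B + q')) := by
    have hy : y = (p * t + p') / (q * t + q') := by rw [eq_div_iff hD.ne', h.eq]
    rw [hy, hα, div_sub_div _ _ hD.ne' hden, hB]
    congr 1
    ring
  have hdist' : |y - α| = |t - B| / ((q * t + q') * |q * B + q'|) := by
    rw [hdist, abs_div, abs_mul, abs_mul, hdet', one_mul, abs_of_pos hD]
  have hnorm : ((q : ℝ) * k + q') ^ 2 + q * e * (q * k + q') - (q * e) ^ 2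
      = (q * B + q') * (q * B' + q') := by
    rw [hB, hB']
    linear_combination (q : ℝ) ^ 2 * e ^ 2 * goldenRat_sq
  have hEpos : 0 < |q * B + q'| := abs_pos.2 hden
  have h5 : (0 : ℝ) < 2 * goldenRat - 1 := by linarith [goldenRat_gt]
  refine ⟨α, hmem, ?_, ?_⟩
  · rw [hH, hnorm, hdist', abs_mul, sqrt_five_eq]
    have : 2 * (|q * B + q'| * |q * B' + q'|) / (2 * goldenRat - 1) *
        (|t - B| / ((q * t + q') * |q * B + q'|))
        = 2 * (|t - B| * |q * B' + q'|) / ((2 * goldenRat - 1) * (q * t + q')) := by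
      field_simp
    rw [this, div_le_iff₀ (by positivity)]
    have : (3 / (2 * goldenRat - 1) - 1) * ((2 * goldenRat - 1) * (q * t + q'))
        = 2 * ((2 - goldenRat) * (q * t + q')) := by
      field_simp
      ring
    rw [this]
    linarith
  · rw [hdist', div_le_div_iff₀ (by positivity) (by linarith)]
    have : |t - B| ≤ 4 * (q * t + q') := by linarith
    calc |t - B| * q ≤ (4 * (q * t + q')) * |q * B + q'| := by gcongr
      _ = _ := by ring

lemma exists_approx (h : IsCompleteQuotient y t p p' q q')
    (hgood : goldenRat + 1 ≤ t ∨ goldenRat ≤ t ∧ q ≤ 4 * q') :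
    ∃ α ∈ mobOrbit goldenRat, qiHeight α * |y - α| ≤ 3 / Real.sqrt 5 - 1 ∧
      |y - α| ≤ 4 / q := by
  have hg1 := goldenRat_gt
  have hg2 := goldenRat_lt
  have hsq := goldenRat_sq
  have hq : (1 : ℝ) ≤ q := by exact_mod_cast h.pos
  have hq' : (0 : ℝ) ≤ q' := by exact_mod_cast h.nonneg
  have hqq : (q' : ℝ) ≤ q := by exact_mod_cast h.le
  have ht := h.one_lt
  have hgt : goldenRat ≤ t := by rcases hgood with h | h <;> linarith [h]
  by_cases h4 : q ≤ 4 * q'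
  · have h4' : (q : ℝ) ≤ 4 * q' := by exact_mod_cast h4
    apply h.exists_approx_of_le (e := 1) (by norm_num) 0
    · push_cast
      rw [abs_of_nonneg (by linarith : 0 ≤ t - (1 * goldenRat + 0))]
      have hb : |(q : ℝ) * (1 * (1 - goldenRat) + 0) + q'| ≤ (2 - goldenRat) * q := by
        rw [abs_le]
        constructor <;> nlinarith
      calc _ ≤ t * ((2 - goldenRat) * q) := by
            gcongr
            linarith
        _ ≤ _ := by nlinarith
    · push_cast
      rw [abs_le]
      constructor <;> linarith
    · push_cast
      rw [abs_of_nonneg (by nlinarith)]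
      nlinarith
  · have h4' : 4 * (q' : ℝ) < q := by exact_mod_cast not_le.1 h4
    have hgt : goldenRat + 1 ≤ t := hgood.resolve_right fun h => h4 h.2
    rcases le_total (q' * t) (q + 3 * q') with hc | hc
    · apply h.exists_approx_of_le (e := 1) (by norm_num) 1
      · push_cast
        rw [abs_of_nonneg (by linarith : 0 ≤ t - (1 * goldenRat + 1)),
          abs_of_nonneg (by nlinarith)]
        nlinarith
      · push_cast
        rw [abs_le]
        constructor <;> linarith
      · push_cast
        rw [abs_of_nonneg (by nlinarith)]
        nlinarith
    · apply h.exists_approx_of_le (e := -1) (by norm_num) (-1)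
      · push_cast
        rw [abs_of_nonneg (by linarith : 0 ≤ t - (-1 * goldenRat + -1)),
          abs_of_nonpos (by nlinarith)]
        nlinarith
      · push_cast
        rw [abs_le]
        constructor <;> linarith
      · push_cast
        rw [abs_of_nonpos (by nlinarith)]
        nlinarith

end IsCompleteQuotient

lemma exists_approx_notMem {y : ℝ} (hy : Irrational y) (hyZ : y ∉ mobOrbit goldenRat)
    (F : Finset ℝ) : ∃ α ∈ mobOrbit goldenRat, α ∉ F ∧
      qiHeight α * |y - α| ≤ 3 / Real.sqrt 5 - 1 := by
  obtain ⟨δ, hδ, hball⟩ := Metric.isOpen_iff.1 (F.erase y).finite_toSet.isClosed.isOpen_compl y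
    (by simp)
  obtain ⟨n, hn⟩ := exists_nat_gt (8 / δ)
  obtain ⟨t, p, p', q, q', h, hnq, hgood⟩ := IsCompleteQuotient.exists_good hy n
  obtain ⟨α, hα, h1, h2⟩ := h.exists_approx hgood
  refine ⟨α, hα, fun hF => ?_, h1⟩
  have hq : (1 : ℝ) ≤ q := by exact_mod_cast h.pos
  have hqq : (q' : ℝ) ≤ q := by exact_mod_cast h.le
  have hnq' : (n : ℝ) ≤ q + q' := by exact_mod_cast hnq
  have hlt : 4 / (q : ℝ) < δ := by
    rw [div_lt_iff₀ hδ] at hn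
    rw [div_lt_iff₀ (by linarith)]
    nlinarith
  have hmem : α ∈ Metric.ball y δ := by
    rw [Metric.mem_ball, dist_comm, Real.dist_eq]
    linarith
  apply hball hmem
  have hne : α ≠ y := fun he => hyZ (he ▸ hα)
  simp [hne, hF]

lemma iInf_le_hurwitz {y : ℝ} (hy : Irrational y) (hyZ : y ∉ mobOrbit goldenRat)
    (F : Finset ℝ) :
    ⨅ α : {α : ℝ // α ∈ mobOrbit goldenRat ∧ α ∉ F}, qiHeight α.1 * |y - α.1|
      ≤ 3 / Real.sqrt 5 - 1 := by
  obtain ⟨α, hα, hF, hle⟩ := exists_approx_notMem hy hyZ F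
  refine (ciInf_le ⟨0, ?_⟩ ⟨α, hα, hF⟩).trans hle
  rintro _ ⟨β, rfl⟩
  have : 0 ≤ qiHeight β.1 := by unfold qiHeight; positivity
  positivity

lemma approxConst_le {y : ℝ} (hy : Irrational y) (hyZ : y ∉ mobOrbit goldenRat) :
    approxConst (mobOrbit goldenRat) y ≤ 3 / Real.sqrt 5 - 1 :=
  ciSup_le (iInf_le_hurwitz hy hyZ)

lemma le_approxConst {y K : ℝ} (hy : Irrational y) (hyZ : y ∉ mobOrbit goldenRat)
    (F : Finset ℝ) (h : ∀ α ∈ mobOrbit goldenRat, α ∉ F → K ≤ qiHeight α * |y - α|) :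
    K ≤ approxConst (mobOrbit goldenRat) y := by
  obtain ⟨α, hα, hF, -⟩ := exists_approx_notMem hy hyZ F
  have : Nonempty {α : ℝ // α ∈ mobOrbit goldenRat ∧ α ∉ F} := ⟨⟨α, hα, hF⟩⟩
  have hK : K ≤ ⨅ α : {α : ℝ // α ∈ mobOrbit goldenRat ∧ α ∉ F}, qiHeight α.1 * |y - α.1| :=
    le_ciInf fun β => h β.1 β.2.1 β.2.2
  have hbdd : BddAbove (Set.range fun F : Finset ℝ =>
      ⨅ α : {α : ℝ // α ∈ mobOrbit goldenRat ∧ α ∉ F}, qiHeight α.1 * |y - α.1|) := by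
    refine ⟨3 / Real.sqrt 5 - 1, ?_⟩
    rintro _ ⟨G, rfl⟩
    exact iInf_le_hurwitz hy hyZ G
  exact hK.trans (le_ciSup hbdd F)

/-- The values of the pairing of the binary forms of discriminant `5` with the form
`X² - N X Y - Y²` have a gap between `N + 4` and `3 N`. -/
lemma pairing_gap {N : ℤ} (hN : 5 ≤ N) (n : ℕ) : ∀ a b c : ℤ, b.natAbs = n →
    b ^ 2 - 4 * a * c = 5 →
    |2 * (c - a) + b * N| ≤ N + 4 ∨ 3 * N ≤ |2 * (c - a) + b * N| := by
  induction n using Nat.strong_induction_on with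
  | _ n ih =>
  have key : ∀ a b c : ℤ, b.natAbs = n → b ^ 2 - 4 * a * c = 5 → 0 < a → 0 < b → 0 < c →
      |2 * (c - a) + b * N| ≤ N + 4 ∨ 3 * N ≤ |2 * (c - a) + b * N| := by
    intro a b c hb hd ha hb0 hc
    by_contra! hcon
    obtain ⟨hlow, hcon2⟩ := hcon
    obtain ⟨h1, h2⟩ := abs_lt.1 hcon2
    have hb3 : 3 ≤ b := by nlinarith [mul_pos ha hc]
    have hodd : b % 2 = 1 := by
      rcases Int.emod_two_eq_zero_or_one b with h | h
      · exfalso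
        obtain ⟨k, rfl⟩ := Int.dvd_of_emod_eq_zero h
        ring_nf at hd
        omega
      · exact h
    have hac : c ≤ a := by nlinarith
    by_cases hb7 : b < 7
    · have : b = 3 ∨ b = 5 := by omega
      rcases this with rfl | rfl
      · have hac1 : a * c = 1 := by linarith
        have : a = 1 := by nlinarith
        have : c = 1 := by nlinarith
        omega
      · have hac1 : a * c = 5 := by linarith
        have : c = 1 := by
          have : c < 3 := by nlinarith
          interval_cases c <;> omega
        subst this
        omega
    · have hb7 : 7 ≤ b := by omega
      have hcN : c * N < b := by
        by_contra! hle
        have h3 : (b - 3) * N < 2 * (a - c) := by nlinarith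
        have h4 : b * ((b - 3) * N) ≤ (c * N) * (2 * (a - c)) := by
          apply mul_le_mul hle h3.le _ (by nlinarith)
          nlinarith
        have h5 : b * (b - 3) ≤ c * (2 * (a - c)) := by
          have : b * (b - 3) * N ≤ c * (2 * (a - c)) * N := by linarith
          exact le_of_mul_le_mul_right this (by linarith)
        nlinarith
      have hlt : (b - 2 * N * c).natAbs < n := by
        have : 0 < N * c := by positivity
        rw [mul_comm] at hcN
        have h6 : 2 * N * c = 2 * (N * c) := by ring
        omega
      have hind := ih _ hlt c (b - 2 * N * c) (a - b * N + c * N ^ 2) rfl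
        (by linear_combination hd)
      rw [show 2 * (a - b * N + c * N ^ 2 - c) + (b - 2 * N * c) * N
        = -(2 * (c - a) + b * N) by ring, abs_neg] at hind
      omega
  intro a b c hb hd
  rcases lt_or_ge 0 (a * c) with hac | hac
  · have hbne : b ≠ 0 := by
      rintro rfl
      linarith
    rcases lt_or_gt_of_ne hbne with hb0 | hb0
    · rcases pos_and_pos_or_neg_and_neg_of_mul_pos hac with ⟨ha, hc⟩ | ⟨ha, hc⟩
      · have := key c (-b) a (by simpa using hb) (by linear_combination hd) hc (by omega) ha
        rwa [show 2 * (a - c) + -b * N = -(2 * (c - a) + b * N) by ring, abs_neg] at this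
      · have := key (-a) (-b) (-c) (by simpa using hb) (by linear_combination hd) (by omega)
          (by omega) (by omega)
        rwa [show 2 * (-c - -a) + -b * N = -(2 * (c - a) + b * N) by ring, abs_neg] at this
    · rcases pos_and_pos_or_neg_and_neg_of_mul_pos hac with ⟨ha, hc⟩ | ⟨ha, hc⟩
      · exact key a b c hb hd ha hb0 hc
      · have := key (-c) b (-a) hb (by linear_combination hd) (by omega) hb0 (by omega)
        rwa [show 2 * (-a - -c) + b * N = 2 * (c - a) + b * N by ring] at this
  · left
    have hac1 : a * c = -1 := by
      have h1 : -1 ≤ a * c := by nlinarith [sq_nonneg b]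
      have h2 : a * c ≠ 0 := fun h => int_sq_ne_five b (by linarith)
      omega
    have hb1 : b ^ 2 = 1 := by linarith
    rcases sq_eq_one_iff.1 hb1 with rfl | rfl <;>
    rcases Int.mul_eq_neg_one_iff_eq_one_or_neg_one.1 hac1 with ⟨rfl, rfl⟩ | ⟨rfl, rfl⟩ <;>
    rw [abs_le] <;> constructor <;> linarith

/-- The real number with constant continued fraction expansion `[N; N, N, …]`. -/
noncomputable def metallicMean (N : ℕ) : ℝ := (N + Real.sqrt (N ^ 2 + 4)) / 2

lemma metallicMean_sq (N : ℕ) : metallicMean N ^ 2 = N * metallicMean N + 1 := by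
  have h : Real.sqrt ((N : ℝ) ^ 2 + 4) ^ 2 = N ^ 2 + 4 := Real.sq_sqrt (by positivity)
  unfold metallicMean
  nlinarith

lemma irrational_metallicMean {N : ℕ} (hN : 2 ≤ N) : Irrational (metallicMean N) := by
  have h : Irrational (Real.sqrt ((N ^ 2 + 4 : ℕ) : ℝ)) := by
    rw [irrational_sqrt_natCast_iff]
    rintro ⟨r, hr⟩
    have h1 : N < r := by nlinarith
    have h2 : r < N + 1 := by nlinarith
    omega
  rintro ⟨r, hr⟩
  refine h ⟨2 * r - N, ?_⟩
  push_cast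
  rw [hr, metallicMean]
  ring

lemma metallicMean_notMem {N : ℕ} (hN : 2 ≤ N) : metallicMean N ∉ mobOrbit goldenRat := by
  intro hmem
  obtain ⟨a, b, c, hd, h⟩ := exists_disc_five_of_mem_mobOrbit hmem
  have hlin : ((b + a * N : ℤ) : ℝ) * metallicMean N + ((c + a : ℤ) : ℝ) = 0 := by
    push_cast
    linear_combination h - (a : ℝ) * metallicMean_sq N
  have hb : b + a * N = 0 := by
    by_contra hne
    have hne' : ((b + a * N : ℤ) : ℝ) ≠ 0 := by exact_mod_cast hne
    apply irrational_metallicMean hN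
    refine ⟨-(c + a : ℤ) / (b + a * N : ℤ), ?_⟩
    rw [Rat.cast_div, Rat.cast_neg, Rat.cast_intCast, Rat.cast_intCast, div_eq_iff hne']
    linear_combination -hlin
  have hc : c + a = 0 := by
    rw [hb] at hlin
    have : ((c + a : ℤ) : ℝ) = 0 := by simpa using hlin
    exact_mod_cast this
  obtain rfl : b = -(a * N) := by linarith
  obtain rfl : c = -a := by linarith
  have ha := leadingCoeff_ne_zero_of_disc_five hd
  have ha1 : 1 ≤ a ^ 2 := by
    have := sq_pos_of_ne_zero ha
    omega
  have hN' : (2 : ℤ) ≤ N := by exact_mod_cast hN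
  nlinarith [mul_nonneg (sub_nonneg.2 ha1) (sq_nonneg (N : ℤ))]

/-- The elements of the orbit of the Golden Ratio whose height is too small for the lower bound. -/
lemma exists_exceptional_finset (N : ℕ) : ∃ F : Finset ℝ, ∀ (α : ℝ) (a b c : ℤ),
    b ^ 2 - 4 * a * c = 5 → (a : ℝ) * α ^ 2 + b * α + c = 0 → |(a : ℝ)| < 10 →
    |2 * a * metallicMean N + b| ≤ 5 → α ∈ F := by
  obtain ⟨M, hM⟩ := exists_int_gt (5 + 20 * |metallicMean N|)
  refine ⟨((Finset.Icc (-10) 10 ×ˢ Finset.Icc (-M) M) ×ˢ {Real.sqrt 5, -Real.sqrt 5}).image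
    fun x : (ℤ × ℤ) × ℝ => (x.2 - x.1.2) / (2 * x.1.1), ?_⟩
  intro α a b c hd h ha hP
  rw [Finset.mem_image]
  refine ⟨((a, b), 2 * a * α + b), ?_, ?_⟩
  · have ha' : |a| < 10 := by exact_mod_cast ha
    have hb : |b| ≤ M := by
      have h1 : |(b : ℝ)| ≤ |2 * a * metallicMean N + b| + |2 * a * metallicMean N| := by
        have := abs_sub (2 * a * metallicMean N + b) (2 * a * metallicMean N)
        rwa [add_sub_cancel_left] at this
      have h2 : |2 * a * metallicMean N| ≤ 20 * |metallicMean N| := by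
        rw [abs_mul, abs_mul, abs_two]
        gcongr
        linarith
      have : |(b : ℝ)| ≤ M := by linarith
      exact_mod_cast this
    rw [abs_lt] at ha'
    rw [abs_le] at hb
    have := eq_or_eq_neg_of_abs_eq (abs_deriv_of_disc_five hd h)
    simp only [Finset.mem_product, Finset.mem_Icc, Finset.mem_insert, Finset.mem_singleton]
    refine ⟨⟨⟨?_, ?_⟩, ?_, ?_⟩, this⟩ <;> omega
  · have : (a : ℝ) ≠ 0 := by exact_mod_cast leadingCoeff_ne_zero_of_disc_five hd
    simp only
    field_simp
    ring

lemma le_approxConst_metallicMean {N : ℕ} (hN : 20 ≤ N) :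
    3 / Real.sqrt 5 - 1 - 4 / N ≤ approxConst (mobOrbit goldenRat) (metallicMean N) := by
  obtain ⟨F, hF⟩ := exists_exceptional_finset N
  apply le_approxConst (irrational_metallicMean (by omega)) (metallicMean_notMem (by omega)) F
  intro α hα hαF
  obtain ⟨a, b, c, hd, h⟩ := exists_disc_five_of_mem_mobOrbit hα
  have ha : (a : ℝ) ≠ 0 := by exact_mod_cast leadingCoeff_ne_zero_of_disc_five hd
  have hN0 : (20 : ℝ) ≤ N := by exact_mod_cast hN
  have hs1 : (2.236 : ℝ) < Real.sqrt 5 := by linarith [goldenRat_gt, sqrt_five_eq]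
  have hs2 : Real.sqrt 5 < 2.2362 := by linarith [goldenRat_lt, sqrt_five_eq]
  have habs := abs_deriv_of_disc_five hd h
  set y := metallicMean N with hy
  set P := 2 * a * y + b with hPdef
  have hHP : qiHeight α * |y - α| = |P - (2 * a * α + b)| / Real.sqrt 5 := by
    rw [qiHeight_of_disc_five hd h, show P - (2 * a * α + b) = 2 * a * (y - α) by
      rw [hPdef]; ring, abs_mul, abs_mul, abs_two]
    ring
  have hlow1 : |P| - Real.sqrt 5 ≤ |P - (2 * a * α + b)| := habs ▸ abs_sub_abs_le_abs_sub _ _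
  have hlow2 : Real.sqrt 5 - |P| ≤ |P - (2 * a * α + b)| := by
    rw [abs_sub_comm P]
    exact habs ▸ abs_sub_abs_le_abs_sub _ _
  have hgoal : 3 - 4 / (N : ℝ) ≤ |P| ∨ |P| ≤ 1 + 5 / N := by
    by_cases hP5 : |P| ≤ 5
    · have ha10 : 10 ≤ |(a : ℝ)| := by
        by_contra! hlt
        exact hαF (hF α a b c hd h hlt hP5)
      set s := Real.sqrt ((N : ℝ) ^ 2 + 4) with hs
      have hsq : s ^ 2 = N ^ 2 + 4 := Real.sq_sqrt (by positivity)
      have hsN : (N : ℝ) ≤ s := Real.le_sqrt_of_sq_le (by linarith)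
      have hsN1 : s ≤ N + 1 := by
        apply Real.sqrt_le_iff.2
        constructor <;> nlinarith
      have hys : s = 2 * y - N := by rw [hy, metallicMean]; ring
      have hd' : (b : ℝ) ^ 2 - 4 * a * c = 5 := by exact_mod_cast hd
      have hm : 2 * ((c : ℝ) - a) + b * N = -(s * P) + (P ^ 2 - 5) / (2 * a) := by
        field_simp
        rw [hys, hPdef]
        linear_combination -hd' + 4 * (a : ℝ) ^ 2 * metallicMean_sq N
      have herr : |(P ^ 2 - 5) / (2 * (a : ℝ))| ≤ 1 := by
        rw [abs_div, abs_mul, abs_two, div_le_one (by positivity), abs_le]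
        rw [abs_le] at hP5
        constructor <;> nlinarith
      have hsP : |s * P| = s * |P| := by rw [abs_mul, abs_of_nonneg (by linarith)]
      have hup : |2 * ((c : ℝ) - a) + b * N| ≤ s * |P| + 1 := by
        rw [hm, ← hsP, ← abs_neg (s * P)]
        exact (abs_add_le _ _).trans (by linarith)
      have hdown : s * |P| ≤ |2 * ((c : ℝ) - a) + b * N| + 1 := by
        have : s * P = (P ^ 2 - 5) / (2 * a) - (2 * ((c : ℝ) - a) + b * N) := by
          rw [hm]; ring
        rw [← hsP, this]
        exact (abs_sub _ _).trans (by linarith)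
      have hP0 := abs_nonneg P
      have hgap := pairing_gap (N := (N : ℤ)) (by omega) _ a b c rfl hd
      rcases hgap with hg | hg
      · right
        have hg' : |2 * ((c : ℝ) - a) + b * N| ≤ N + 4 := by exact_mod_cast hg
        rw [show 1 + 5 / (N : ℝ) = (N + 5) / N by field_simp, le_div_iff₀ (by linarith)]
        linarith [mul_le_mul_of_nonneg_right hsN hP0]
      · left
        have hg' : 3 * (N : ℝ) ≤ |2 * ((c : ℝ) - a) + b * N| := by exact_mod_cast hg
        rw [show 3 - 4 / (N : ℝ) = (3 * N - 4) / N by field_simp, div_le_iff₀ (by linarith)]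
        by_contra! hlt
        have h3 : |P| < 3 := lt_of_mul_lt_mul_right (by linarith) (by linarith : (0 : ℝ) ≤ N)
        linarith [mul_le_mul_of_nonneg_right hsN1 hP0]
    · left
      have : 0 ≤ 4 / (N : ℝ) := by positivity
      linarith
  have hdiv : 5 / (N : ℝ) ≤ 1 / 4 := by
    rw [div_le_div_iff₀ (by linarith) (by norm_num)]
    linarith
  have h4N : 0 ≤ 4 / (N : ℝ) := by positivity
  rw [hHP, le_div_iff₀ (by linarith)]
  have hexp : (3 / Real.sqrt 5 - 1 - 4 / N) * Real.sqrt 5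
      = 3 - Real.sqrt 5 - 4 / N * Real.sqrt 5 := by
    field_simp
  rw [hexp]
  have h4s : 4 / (N : ℝ) ≤ 4 / N * Real.sqrt 5 := le_mul_of_one_le_right h4N (by linarith)
  rcases hgoal with hg | hg <;> linarith

/-- Parkkonen-Paulin: for the approximation of real numbers by the elements of the orbit
`PSL₂(ℤ)·φ` of the Golden Ratio `φ` with height function `H(α) = 2/|α − α^σ|`, the
Hurwitz constant, i.e. the supremum of the approximation constants `c(y)` over all
`y ∈ ℝ ∖ (ℚ ∪ PSL₂(ℤ)·φ)`, equals `3/√5 − 1`. -/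
theorem hurwitzConstant_goldenRatio :
    sSup (lagrangeSpectrum (mobOrbit goldenRat)) = 3 / Real.sqrt 5 - 1 := by
  have hub : ∀ x ∈ lagrangeSpectrum (mobOrbit goldenRat), x ≤ 3 / Real.sqrt 5 - 1 := by
    rintro _ ⟨y, ⟨hy, hyZ⟩, rfl⟩
    exact approxConst_le hy hyZ
  have hmem : ∀ N : ℕ, 20 ≤ N → approxConst (mobOrbit goldenRat) (metallicMean N) ∈
      lagrangeSpectrum (mobOrbit goldenRat) := fun N hN =>
    ⟨_, ⟨irrational_metallicMean (by omega), metallicMean_notMem (by omega)⟩, rfl⟩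
  apply le_antisymm (csSup_le ⟨_, hmem 20 le_rfl⟩ hub)
  have hlim : Filter.Tendsto (fun N : ℕ => 3 / Real.sqrt 5 - 1 - 4 / (N : ℝ)) Filter.atTop
      (nhds (3 / Real.sqrt 5 - 1 - 0)) :=
    tendsto_const_nhds.sub (tendsto_const_div_atTop_nhds_zero_nat 4)
  rw [sub_zero] at hlim
  refine le_of_tendsto hlim (Filter.eventually_atTop.2 ⟨20, fun N hN => ?_⟩)
  exact (le_approxConst_metallicMean hN).trans (le_csSup ⟨_, hub⟩ (hmem N hN))
end
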